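/- For every k ≥ 6 and every n ≥ (k − 1)·2^{k−4}, there exists an n-vertex rainbow P_k-saturated graph with exactly n + (k − 5)·2^{k−5} edges. Consequently, for such k and n, the minimum number of edges in an n-vertex rainbow P_k-saturated graph is at most n + (k − 5)·2^{k−5}. -/

import Mathlib

open SimpleGraph

/-- A proper edge-coloring of `G`: distinct edges sharing a vertex get distinct colors. -/
def IsProperEdgeColoring {V : Type} (G : SimpleGraph V) (c : Sym2 V → ℕ) : Prop :=
  ∀ e₁ ∈ G.edgeSet, ∀ e₂ ∈ G.edgeSet, e₁ ≠ e₂ → (∃ v, v ∈ e₁ ∧ v ∈ e₂) → c e₁ ≠ c e₂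

/-- `G` contains a rainbow copy of `H` under the edge-coloring `c`. -/
def HasRainbowCopy {V W : Type} (G : SimpleGraph V) (H : SimpleGraph W)
    (c : Sym2 V → ℕ) : Prop :=
  ∃ f : W → V, Function.Injective f ∧ (∀ a b, H.Adj a b → G.Adj (f a) (f b)) ∧
    ∀ e₁ ∈ H.edgeSet, ∀ e₂ ∈ H.edgeSet, e₁ ≠ e₂ → c (Sym2.map f e₁) ≠ c (Sym2.map f e₂)

/-- `G` is (properly) rainbow `H`-saturated. -/
def IsRainbowSat {V W : Type} (G : SimpleGraph V) (H : SimpleGraph W) : Prop :=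
  (∃ c : Sym2 V → ℕ, IsProperEdgeColoring G c ∧ ¬ HasRainbowCopy G H c) ∧
  ∀ u v : V, u ≠ v → ¬ G.Adj u v →
    ∀ c : Sym2 V → ℕ,
      IsProperEdgeColoring (G ⊔ SimpleGraph.fromEdgeSet {s(u, v)}) c →
      HasRainbowCopy (G ⊔ SimpleGraph.fromEdgeSet {s(u, v)}) H c


/-! ### Rainbow paths as lists -/

def ecols {V : Type} (c : Sym2 V → ℕ) : List V → List ℕ
  | [] => []
  | [_] => []
  | x :: y :: t => c s(x, y) :: ecols c (y :: t)

def RP {V : Type} (G : SimpleGraph V) (c : Sym2 V → ℕ) (l : List V) : Prop :=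
  l.Nodup ∧ l.IsChain G.Adj ∧ (ecols c l).Nodup

theorem RP.cons {V : Type} {G : SimpleGraph V} {c : Sym2 V → ℕ} {a b : V} {t : List V}
    (h : RP G c (a :: t)) (hab : G.Adj b a) (hb : b ∉ a :: t)
    (hcol : c s(b, a) ∉ ecols c (a :: t)) : RP G c (b :: a :: t) := by
  obtain ⟨h1, h2, h3⟩ := h
  refine ⟨List.nodup_cons.2 ⟨hb, h1⟩, List.isChain_cons_cons.2 ⟨hab, h2⟩, ?_⟩
  simp only [ecols]
  exact List.nodup_cons.2 ⟨hcol, h3⟩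

theorem ecols_length {V : Type} (c : Sym2 V → ℕ) :
    ∀ l : List V, (ecols c l).length = l.length - 1
  | [] => rfl
  | [_] => rfl
  | x :: y :: t => by
    have := ecols_length c (y :: t)
    simp only [ecols, List.length_cons] at this ⊢
    omega

theorem ecols_get {V : Type} (c : Sym2 V → ℕ) :
    ∀ (l : List V) (i : ℕ) (h : i + 1 < l.length),
      (ecols c l)[i]? = some (c s(l[i], l[i + 1]))
  | [], i, h => by simp at h
  | [_], i, h => by simp at h
  | x :: y :: t, 0, h => by simp [ecols]
  | x :: y :: t, i + 1, h => by
    have := ecols_get c (y :: t) i (by simpa using h)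
    simpa [ecols] using this

theorem RP.hasCopy {V : Type} {G : SimpleGraph V} {c : Sym2 V → ℕ} {l : List V} {k : ℕ}
    (h : RP G c l) (hl : l.length = k) : HasRainbowCopy G (SimpleGraph.pathGraph k) c := by
  subst hl
  obtain ⟨h1, h2, h3⟩ := h
  have key : ∀ e ∈ (SimpleGraph.pathGraph l.length).edgeSet,
      ∃ (i : ℕ) (h : i + 1 < l.length), e = s(⟨i, by omega⟩, ⟨i + 1, h⟩) := by
    intro e
    induction e using Sym2.ind with
    | _ x y =>
      intro he
      rw [SimpleGraph.mem_edgeSet, SimpleGraph.pathGraph_adj] at he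
      rcases he with he | he
      · refine ⟨x.1, by omega, ?_⟩
        congr 1
        exact Fin.ext he.symm
      · refine ⟨y.1, by omega, ?_⟩
        rw [Sym2.eq_swap]
        congr 1
        exact Fin.ext he.symm
  refine ⟨fun i => l.get i, List.nodup_iff_injective_get.1 h1, ?_, ?_⟩
  · intro a b hab
    rw [SimpleGraph.pathGraph_adj] at hab
    have h2' := List.isChain_iff_getElem.1 h2
    rcases hab with hab | hab
    · have := h2' a.1 (by omega)
      simpa [hab] using this
    · have := (h2' b.1 (by omega)).symm
      simpa [hab] using this
  · intro e₁ he₁ e₂ he₂ hne heq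
    obtain ⟨i, hi, rfl⟩ := key e₁ he₁
    obtain ⟨j, hj, rfl⟩ := key e₂ he₂
    simp only [Sym2.map_mk, List.get_eq_getElem] at heq
    have hi' := ecols_get c l i hi
    have hj' := ecols_get c l j hj
    rw [heq, ← hj'] at hi'
    have : i = j := (List.getElem?_inj (by rw [ecols_length]; omega) h3).1 hi'
    subst this
    exact hne rfl

theorem proper_ne {V : Type} {G : SimpleGraph V} {c : Sym2 V → ℕ}
    (hc : IsProperEdgeColoring G c) {a b b' : V} (h : G.Adj a b) (h' : G.Adj a b')
    (hne : b ≠ b') : c s(a, b) ≠ c s(a, b') := by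
  refine hc _ h _ h' ?_ ⟨a, by simp, by simp⟩
  intro heq
  exact hne (Sym2.congr_right.1 heq)

theorem pick {V : Type} [DecidableEq V] (C W : Finset V) (U₁ U₂ : Finset ℕ) (f g : V → ℕ)
    (hf : Set.InjOn f C) (hg : Set.InjOn g C)
    (hcard : W.card + U₁.card + U₂.card < C.card) :
    ∃ b ∈ C, b ∉ W ∧ f b ∉ U₁ ∧ g b ∉ U₂ := by
  by_contra! hcon
  have hsub : C ⊆ W ∪ (C.filter (fun b => f b ∈ U₁) ∪ C.filter (fun b => g b ∈ U₂)) := by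
    intro b hb
    simp only [Finset.mem_union, Finset.mem_filter]
    by_cases h1 : b ∈ W
    · exact Or.inl h1
    by_cases h2 : f b ∈ U₁
    · exact Or.inr (Or.inl ⟨hb, h2⟩)
    · exact Or.inr (Or.inr ⟨hb, hcon b hb h1 h2⟩)
  have h1 : (C.filter (fun b => f b ∈ U₁)).card ≤ U₁.card :=
    Finset.card_le_card_of_injOn f (by intro b hb; simpa using (Finset.mem_filter.1 hb).2)
      (hf.mono (by intro b hb; exact (Finset.mem_filter.1 hb).1))
  have h2 : (C.filter (fun b => g b ∈ U₂)).card ≤ U₂.card :=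
    Finset.card_le_card_of_injOn g (by intro b hb; simpa using (Finset.mem_filter.1 hb).2)
      (hg.mono (by intro b hb; exact (Finset.mem_filter.1 hb).1))
  have h3 := Finset.card_le_card hsub
  have h4 := Finset.card_union_le W
    (C.filter (fun b => f b ∈ U₁) ∪ C.filter (fun b => g b ∈ U₂))
  have h5 := Finset.card_union_le (C.filter (fun b => f b ∈ U₁)) (C.filter (fun b => g b ∈ U₂))
  omega

theorem star_injOn {V : Type} {G : SimpleGraph V} {c : Sym2 V → ℕ}
    (hc : IsProperEdgeColoring G c) {a : V} {C : Finset V} (h : ∀ b ∈ C, G.Adj a b) :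
    Set.InjOn (fun b => c s(a, b)) C := by
  intro b hb b' hb' heq
  by_contra hne
  exact proper_ne hc (h b hb) (h b' hb') hne heq

/-- choose a neighbour in `C` avoiding vertices `W` and colours `U` -/
theorem pick1 {V : Type} [DecidableEq V] {G : SimpleGraph V} {c : Sym2 V → ℕ}
    (hc : IsProperEdgeColoring G c) {a : V} (C W : Finset V) (U : Finset ℕ)
    (h : ∀ b ∈ C, G.Adj a b) (hcard : W.card + U.card < C.card) :
    ∃ b ∈ C, b ∉ W ∧ c s(a, b) ∉ U := by
  obtain ⟨b, hb, h1, h2, -⟩ := pick C W U ∅ _ _ (star_injOn hc h) (star_injOn hc h)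
    (by simpa using hcard)
  exact ⟨b, hb, h1, h2⟩

theorem extend {V : Type} [DecidableEq V] {G : SimpleGraph V} {c : Sym2 V → ℕ}
    (hc : IsProperEdgeColoring G c) {a p : V} {t : List V} (h : RP G c (a :: p :: t))
    (C W : Finset V) (hC : ∀ b ∈ C, G.Adj a b)
    (hW : ∀ b ∈ a :: p :: t, b ∈ C → b ∈ W) (hcard : W.card + t.length < C.card) :
    ∃ b ∈ C, b ∉ W ∧ RP G c (b :: a :: p :: t) := by
  have hl : (ecols c (p :: t)).toFinset.card ≤ t.length := by
    refine (List.toFinset_card_le _).trans ?_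
    rw [ecols_length]; simp
  obtain ⟨b, hb, h1, h2⟩ := pick1 hc C W (ecols c (p :: t)).toFinset hC (by omega)
  have hnot : b ∉ a :: p :: t := fun hb' => h1 (hW b hb' hb)
  refine ⟨b, hb, h1, h.cons (hC b hb).symm hnot ?_⟩
  simp only [ecols, List.mem_cons, not_or]
  rw [Sym2.eq_swap]
  refine ⟨?_, by simpa using h2⟩
  refine proper_ne hc (hC b hb) ?_ ?_
  · exact (List.isChain_cons_cons.1 h.2.1).1
  · rintro rfl; simp at hnot

theorem chain {V : Type} [DecidableEq V] {G : SimpleGraph V} {c : Sym2 V → ℕ}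
    (hc : IsProperEdgeColoring G c) (B : Finset V) (Us : Finset ℕ) :
    ∀ (as : List V) (a p : V) (t : List V) (W : Finset V),
      RP G c (a :: p :: t) →
      (∀ x ∈ a :: as, ∀ b ∈ B, G.Adj x b) → as.Nodup → (∀ x ∈ as, x ∉ a :: p :: t) →
      (∀ x ∈ as, x ∉ B) →
      (∀ v ∈ a :: p :: t, v ∈ B → v ∈ W) →
      (∀ γ ∈ ecols c (a :: p :: t), γ ∉ Us) →
      W.card + 2 * (t.length + 1) + 2 * Us.card + 5 * as.length ≤ B.card + 5 →
      ∃ z q t', RP G c (z :: q :: t') ∧ (a :: as).getLast? = some z ∧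
        t'.length = t.length + 2 * as.length ∧
        (∀ v ∈ z :: q :: t', v ∈ a :: p :: t ∨ v ∈ as ∨ (v ∈ B ∧ v ∉ W)) ∧
        (∀ γ ∈ ecols c (z :: q :: t'), γ ∉ Us) ∧
        ∃ W' : Finset V, W'.card ≤ W.card + as.length ∧
          ∀ v ∈ z :: q :: t', v ∈ B → v ∈ W' := by
  intro as
  induction as with
  | nil =>
    intro a p t W h _ _ _ _ hW hU _
    exact ⟨a, p, t, h, rfl, rfl, fun v hv => Or.inl hv, hU, W, by simp, hW⟩
  | cons a' as ih =>
    intro a p t W h hB hnd hdis hAB hW hU hcard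
    simp only [List.length_cons] at hcard
    have hl : ((ecols c (p :: t)).toFinset ∪ Us).card ≤ t.length + Us.card := by
      refine (Finset.card_union_le _ _).trans ?_
      have := List.toFinset_card_le (ecols c (p :: t))
      rw [ecols_length] at this
      simp only [List.length_cons] at this
      omega
    have hl2 : ((ecols c (a :: p :: t)).toFinset ∪ Us).card ≤ t.length + 1 + Us.card := by
      refine (Finset.card_union_le _ _).trans ?_
      have := List.toFinset_card_le (ecols c (a :: p :: t))
      rw [ecols_length] at this
      simp only [List.length_cons] at this
      omega
    have hBa : ∀ b ∈ B, G.Adj a b := hB a (by simp)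
    have hBa' : ∀ b ∈ B, G.Adj a' b := hB a' (by simp)
    obtain ⟨b, hb, h1, h2, h3⟩ := pick B W ((ecols c (p :: t)).toFinset ∪ Us)
      ((ecols c (a :: p :: t)).toFinset ∪ Us) _ _ (star_injOn hc hBa) (star_injOn hc hBa')
      (by omega)
    simp only [Finset.mem_union, List.mem_toFinset, not_or] at h2 h3
    have hnot : b ∉ a :: p :: t := fun hb' => h1 (hW b hb' hb)
    have hap : G.Adj a p := (List.isChain_cons_cons.1 h.2.1).1
    have hbp : b ≠ p := by rintro rfl; simp at hnot
    have hRP1 : RP G c (b :: a :: p :: t) := by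
      refine h.cons (hBa b hb).symm hnot ?_
      simp only [ecols, List.mem_cons, not_or]
      rw [Sym2.eq_swap]
      exact ⟨proper_ne hc (hBa b hb) hap hbp, h2.1⟩
    have ha'P : a' ∉ a :: p :: t := hdis a' (by simp)
    have ha'a : a' ≠ a := by rintro rfl; simp at ha'P
    have ha'b : a' ≠ b := by rintro rfl; exact hAB a' (by simp) hb
    have hcol : c s(a', b) ≠ c s(b, a) := by
      rw [Sym2.eq_swap]
      exact proper_ne hc (hBa' b hb).symm (hBa b hb).symm ha'a
    have hRP2 : RP G c (a' :: b :: a :: p :: t) := by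
      refine hRP1.cons (hBa' b hb) ?_ ?_
      · rw [List.mem_cons, not_or]; exact ⟨ha'b, ha'P⟩
      · rw [ecols, List.mem_cons, not_or]; exact ⟨hcol, h3.1⟩
    have hnd' := List.nodup_cons.1 hnd
    obtain ⟨z, q, t', r1, r2, r3, r4, r5, W', r6, r7⟩ := ih a' b (a :: p :: t) (insert b W) hRP2
      (fun x hx => hB x (List.mem_cons_of_mem _ hx)) hnd'.2
      (by
        intro x hx hx'
        rw [List.mem_cons, List.mem_cons] at hx'
        rcases hx' with rfl | rfl | hx'
        · exact hnd'.1 hx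
        · exact hAB x (List.mem_cons_of_mem _ hx) hb
        · exact hdis x (List.mem_cons_of_mem _ hx) hx')
      (fun x hx => hAB x (List.mem_cons_of_mem _ hx))
      (by
        intro v hv hvB
        rw [List.mem_cons, List.mem_cons] at hv
        rcases hv with rfl | rfl | hv
        · exact absurd hvB (hAB v (by simp))
        · simp
        · exact Finset.mem_insert_of_mem (hW v hv hvB))
      (by
        intro γ hγ
        rw [ecols, List.mem_cons, ecols, List.mem_cons] at hγ
        rcases hγ with rfl | rfl | hγ
        · exact h3.2
        · rw [Sym2.eq_swap]; exact h2.2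
        · exact hU γ hγ)
      (by
        rw [Finset.card_insert_of_notMem h1]
        simp only [List.length_cons]
        omega)
    refine ⟨z, q, t', r1, ?_, ?_, ?_, r5, W', ?_, r7⟩
    · rw [← r2]; simp
    · simp only [List.length_cons] at r3 ⊢; omega
    · intro v hv
      rcases r4 v hv with h' | h' | h'
      · rw [List.mem_cons, List.mem_cons] at h'
        rcases h' with rfl | rfl | h'
        · exact Or.inr (Or.inl (by simp))
        · exact Or.inr (Or.inr ⟨hb, h1⟩)
        · exact Or.inl h'
      · exact Or.inr (Or.inl (List.mem_cons_of_mem _ h'))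
      · exact Or.inr (Or.inr ⟨h'.1, fun hh => h'.2 (Finset.mem_insert_of_mem hh)⟩)
    · rw [Finset.card_insert_of_notMem h1] at r6
      simp only [List.length_cons]
      omega

theorem RP4 {V : Type} {G : SimpleGraph V} {c : Sym2 V → ℕ}
    (hc : IsProperEdgeColoring G c) {a p2 p1 p0 : V} (h1 : G.Adj a p2) (h2 : G.Adj p2 p1)
    (h3 : G.Adj p1 p0) (n1 : a ≠ p1) (n2 : a ≠ p0) (n3 : p2 ≠ p0)
    (hcol : c s(p2, a) ≠ c s(p1, p0)) : RP G c [a, p2, p1, p0] := by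
  have e1 : c s(p2, a) ≠ c s(p2, p1) := proper_ne hc h1.symm h2 n1
  have e2 : c s(p1, p2) ≠ c s(p1, p0) := proper_ne hc h2.symm h3 n3
  rw [Sym2.eq_swap] at hcol e1 e2
  refine ⟨?_, ?_, ?_⟩
  · simp [h1.ne, h2.ne, h3.ne, n1, n2, n3]
  · simp [h1, h2, h3]
  · simp [ecols, hcol, e1, e2]

/-! ### The graphs -/

abbrev VT (m s T L : ℕ) : Type := (Fin m × Fin s) ⊕ (Fin T ⊕ Fin L)

def cg {m s T L : ℕ} (cp : Fin T → Fin m) (par : Fin L → Fin T) : SimpleGraph (VT m s T L) where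
  Adj u v := match u, v with
    | .inl a, .inl a' => a.1 = a'.1 ∧ a.2 ≠ a'.2
    | .inl a, .inr (.inl b) => cp b = a.1
    | .inr (.inl b), .inl a => cp b = a.1
    | .inr (.inl b), .inr (.inr l) => par l = b
    | .inr (.inr l), .inr (.inl b) => par l = b
    | _, _ => False
  symm := ⟨by
    rintro (a | b | l) (a' | b' | l') h
    all_goals first | exact h | exact ⟨h.1.symm, h.2.symm⟩⟩
  loopless := ⟨by
    rintro (a | b | l) h
    · exact h.2 rfl
    · exact h
    · exact h⟩

section
variable {m s T L : ℕ} {cp : Fin T → Fin m} {par : Fin L → Fin T}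

def cpy (cp : Fin T → Fin m) (par : Fin L → Fin T) : VT m s T L → Fin m
  | .inl a => a.1
  | .inr (.inl b) => cp b
  | .inr (.inr l) => cp (par l)

theorem cpy_eq {u v : VT m s T L} (h : (cg cp par).Adj u v) : cpy cp par u = cpy cp par v := by
  rcases u with (a | b | l) <;> rcases v with (a' | b' | l')
  · exact h.1
  · exact Eq.symm h
  · exact h.elim
  · exact h
  · exact h.elim
  · have h : par l' = b := h
    simp [cpy, h]
  · exact h.elim
  · have h : par l = b' := h
    simp [cpy, h]
  · exact h.elim

theorem adj_leaf {v : VT m s T L} {l : Fin L} (h : (cg cp par).Adj v (.inr (.inr l))) :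
    v = .inr (.inl (par l)) := by
  rcases v with (a' | b' | l')
  · exact h.elim
  · have h : par l = b' := h
    rw [h]
  · exact h.elim

theorem no_long {k : ℕ} (f : Fin k → VT m s T L) (hf : Function.Injective f)
    (hadj : ∀ i j : Fin k, i.1 + 1 = j.1 → (cg cp par).Adj (f i) (f j))
    (o : ℕ) (ho : o + 2 * s + 2 ≤ k)
    (hnl : ∀ i : Fin k, o ≤ i.1 → i.1 < o + 2 * s + 2 → ∀ l, f i ≠ .inr (.inr l)) : False := by
  have hcp : ∀ (d : ℕ) (hd : o + d < k),
      cpy cp par (f ⟨o + d, hd⟩) = cpy cp par (f ⟨o, by omega⟩) := by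
    intro d
    induction d with
    | zero => intro hd; rfl
    | succ d ih =>
      intro hd
      rw [← ih (by omega)]
      exact (cpy_eq (hadj ⟨o + d, by omega⟩ ⟨o + (d + 1), hd⟩ (by simp; omega))).symm
  have hA : ∀ j : Fin (s + 1), ∃ (d : ℕ) (hd : o + d < k) (x : Fin s),
      d / 2 = j.1 ∧ f ⟨o + d, hd⟩ = .inl (cpy cp par (f ⟨o, by omega⟩), x) := by
    intro j
    have hj := j.2
    have key : ∀ (d : ℕ) (hd : o + d < k), (∃ a, f ⟨o + d, hd⟩ = .inl a) →
        ∃ x, f ⟨o + d, hd⟩ = .inl (cpy cp par (f ⟨o, by omega⟩), x) := by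
      rintro d hd ⟨a, ha⟩
      refine ⟨a.2, ?_⟩
      rw [← hcp d hd, ha]
      rfl
    have hor : (∃ a, f ⟨o + 2 * j.1, by omega⟩ = .inl a) ∨
        (∃ a, f ⟨o + (2 * j.1 + 1), by omega⟩ = .inl a) := by
      have h1 := hadj ⟨o + 2 * j.1, by omega⟩ ⟨o + (2 * j.1 + 1), by omega⟩ (by simp; omega)
      have h2 := hnl ⟨o + 2 * j.1, by omega⟩ (by simp) (by simp; omega)
      have h3 := hnl ⟨o + (2 * j.1 + 1), by omega⟩ (by simp) (by simp; omega)
      rcases hu : f ⟨o + 2 * j.1, by omega⟩ with (a | b | l)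
      · exact Or.inl ⟨a, rfl⟩
      · rcases hv : f ⟨o + (2 * j.1 + 1), by omega⟩ with (a' | b' | l')
        · exact Or.inr ⟨a', rfl⟩
        · rw [hu, hv] at h1
          exact h1.elim
        · exact absurd hv (h3 l')
      · exact absurd hu (h2 l)
    rcases hor with h | h
    · obtain ⟨x, hx⟩ := key _ _ h
      exact ⟨2 * j.1, by omega, x, by omega, hx⟩
    · obtain ⟨x, hx⟩ := key _ _ h
      exact ⟨2 * j.1 + 1, by omega, x, by omega, hx⟩
  choose d hd x hdj hx using hA
  have hinj : Function.Injective x := by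
    intro j j' hjj
    have h1 := hx j
    rw [hjj, ← hx j'] at h1
    have h2 := congrArg Fin.val (hf h1)
    simp only at h2
    have h3 := hdj j
    have h4 := hdj j'
    apply Fin.ext
    rw [← h3, ← h4]
    congr 1
    omega
  have := Fintype.card_le_of_injective x hinj
  simp at this

theorem leaf_end {k : ℕ} (f : Fin k → VT m s T L) (hf : Function.Injective f)
    (hadj : ∀ i j : Fin k, i.1 + 1 = j.1 → (cg cp par).Adj (f i) (f j))
    (i : Fin k) (h0 : i.1 ≠ 0) (h1 : i.1 + 1 < k) (l : Fin L) : f i ≠ .inr (.inr l) := by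
  intro h
  have hk := i.2
  have e1 := hadj ⟨i.1 - 1, by omega⟩ i (by simp; omega)
  have e2 := (hadj i ⟨i.1 + 1, by omega⟩ (by simp)).symm
  rw [h] at e1 e2
  have := hf ((adj_leaf e1).trans (adj_leaf e2).symm)
  have := congrArg Fin.val this
  simp at this

theorem exists_free_coloring {V : Type} [Fintype V] {W : Type} (G : SimpleGraph V)
    (H : SimpleGraph W)
    (h : ∀ f : W → V, Function.Injective f → (∀ a b, H.Adj a b → G.Adj (f a) (f b)) → False) :
    ∃ c : Sym2 V → ℕ, IsProperEdgeColoring G c ∧ ¬ HasRainbowCopy G H c := by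
  classical
  refine ⟨fun e => (Fintype.equivFin (Sym2 V) e).1, ?_, ?_⟩
  · intro e₁ _ e₂ _ hne _ heq
    exact hne ((Fintype.equivFin (Sym2 V)).injective (Fin.ext heq))
  · rintro ⟨f, hf, hadj, -⟩
    exact h f hf hadj

theorem free_even :
    ∃ c : Sym2 (VT m s T L) → ℕ, IsProperEdgeColoring (cg cp par) c ∧
      ¬ HasRainbowCopy (cg cp par) (SimpleGraph.pathGraph (2 * s + 4)) c := by
  refine exists_free_coloring _ _ ?_
  intro f hf hadj
  have hadj' : ∀ i j : Fin (2 * s + 4), i.1 + 1 = j.1 → (cg cp par).Adj (f i) (f j) :=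
    fun i j hij => hadj i j (SimpleGraph.pathGraph_adj.2 (Or.inl hij))
  refine no_long f hf hadj' 1 (by omega) ?_
  intro i h1 h2
  exact leaf_end f hf hadj' i (by omega) (by omega)

theorem free_odd (hs : 1 ≤ s) (hub : Fin m → Fin T)
    (hpar : ∀ l, par l = hub (cp (par l))) :
    ∃ c : Sym2 (VT m s T L) → ℕ, IsProperEdgeColoring (cg cp par) c ∧
      ¬ HasRainbowCopy (cg cp par) (SimpleGraph.pathGraph (2 * s + 3)) c := by
  refine exists_free_coloring _ _ ?_
  intro f hf hadj
  have hadj' : ∀ i j : Fin (2 * s + 3), i.1 + 1 = j.1 → (cg cp par).Adj (f i) (f j) :=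
    fun i j hij => hadj i j (SimpleGraph.pathGraph_adj.2 (Or.inl hij))
  by_cases h0 : ∃ l, f ⟨0, by omega⟩ = .inr (.inr l)
  · by_cases h1 : ∃ l, f ⟨2 * s + 2, by omega⟩ = .inr (.inr l)
    · obtain ⟨l, hl⟩ := h0
      obtain ⟨l', hl'⟩ := h1
      have e1 := (hadj' ⟨0, by omega⟩ ⟨1, by omega⟩ (by simp)).symm
      have e2 := hadj' ⟨2 * s + 1, by omega⟩ ⟨2 * s + 2, by omega⟩ (by simp)
      rw [hl] at e1
      rw [hl'] at e2
      have e1' := adj_leaf e1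
      have e2' := adj_leaf e2
      have hcp : ∀ (d : ℕ) (hd : d < 2 * s + 3),
          cpy cp par (f ⟨d, hd⟩) = cpy cp par (f ⟨0, by omega⟩) := by
        intro d
        induction d with
        | zero => intro hd; rfl
        | succ d ih =>
          intro hd
          rw [← ih (by omega)]
          exact (cpy_eq (hadj' ⟨d, by omega⟩ ⟨d + 1, hd⟩ (by simp))).symm
      have g1 := hcp 1 (by omega)
      have g2 := hcp (2 * s + 1) (by omega)
      rw [← g1, e1', e2'] at g2
      simp only [cpy] at g2
      have : par l = par l' := by rw [hpar l, hpar l', g2]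
      rw [← this, ← e1'] at e2'
      have := congrArg Fin.val (hf e2')
      simp at this
      omega
    · refine no_long f hf hadj' 1 (by omega) ?_
      intro i h2 h3 l hl
      rcases Nat.lt_or_ge (i.1 + 1) (2 * s + 3) with h4 | h4
      · exact leaf_end f hf hadj' i (by omega) (by omega) l hl
      · refine h1 ⟨l, ?_⟩
        rw [← hl]
        congr 1
        apply Fin.ext
        simp; omega
  · refine no_long f hf hadj' 0 (by omega) ?_
    intro i h2 h3 l hl
    rcases Nat.eq_zero_or_pos i.1 with h4 | h4
    · refine h0 ⟨l, ?_⟩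
      rw [← hl]
      congr 1
      exact Fin.ext h4.symm
    · exact leaf_end f hf hadj' i (by omega) (by omega) l hl

end

section
variable {m s T L : ℕ} {cp : Fin T → Fin m} {par : Fin L → Fin T}

/-- the `B`-vertices of copy `i` -/
def Bs (cp : Fin T → Fin m) (i : Fin m) : Finset (VT m s T L) :=
  (Finset.univ.filter (fun b => cp b = i)).map ⟨fun b => .inr (.inl b), by
    intro a b h; simpa using h⟩

theorem mem_Bs {i : Fin m} {v : VT m s T L} :
    v ∈ Bs cp i ↔ ∃ b, cp b = i ∧ v = .inr (.inl b) := by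
  simp only [Bs, Finset.mem_map, Finset.mem_filter, Finset.mem_univ, true_and,
    Function.Embedding.coeFn_mk]
  constructor
  · rintro ⟨b, h, rfl⟩; exact ⟨b, h, rfl⟩
  · rintro ⟨b, h, rfl⟩; exact ⟨b, h, rfl⟩

theorem card_Bs (i : Fin m) : (Bs cp i : Finset (VT m s T L)).card =
    (Finset.univ.filter (fun b => cp b = i)).card := by
  simp [Bs]

/-- the leaves at `b` -/
def Ls (m s : ℕ) (par : Fin L → Fin T) (b : Fin T) : Finset (VT m s T L) :=
  (Finset.univ.filter (fun l => par l = b)).map ⟨fun l => .inr (.inr l), by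
    intro a b h; simpa using h⟩

theorem mem_Ls {b : Fin T} {v : VT m s T L} :
    v ∈ Ls m s par b ↔ ∃ l, par l = b ∧ v = .inr (.inr l) := by
  simp only [Ls, Finset.mem_map, Finset.mem_filter, Finset.mem_univ, true_and,
    Function.Embedding.coeFn_mk]
  constructor
  · rintro ⟨b, h, rfl⟩; exact ⟨b, h, rfl⟩
  · rintro ⟨b, h, rfl⟩; exact ⟨b, h, rfl⟩

theorem card_Ls (b : Fin T) : (Ls m s par b).card =
    (Finset.univ.filter (fun l => par l = b)).card := by
  simp [Ls]

/-- the `A`-vertices of copy `i` -/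
def As (T L s : ℕ) (i : Fin m) : Finset (VT m s T L) :=
  Finset.univ.map ⟨fun x => .inl (i, x), by intro a b h; simpa using h⟩

theorem mem_As {i : Fin m} {v : VT m s T L} : v ∈ As T L s i ↔ ∃ x, v = .inl (i, x) := by
  simp only [As, Finset.mem_map, Finset.mem_univ, true_and, Function.Embedding.coeFn_mk]
  constructor
  · rintro ⟨b, rfl⟩; exact ⟨b, rfl⟩
  · rintro ⟨b, rfl⟩; exact ⟨b, rfl⟩

theorem card_As (i : Fin m) : (As T L s i).card = s := by
  simp [As]

theorem common_sat {k : ℕ} (hs : 2 ≤ s)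
    (hB : ∀ i : Fin m, 2 ≤ (Finset.univ.filter (fun b => cp b = i)).card)
    (hL : ∀ l : Fin L, 3 ≤ (Finset.univ.filter (fun l' => par l' = par l)).card)
    (G : SimpleGraph (VT m s T L)) (c : Sym2 (VT m s T L) → ℕ) (hG : cg cp par ≤ G)
    (hc : IsProperEdgeColoring G c)
    (Ext : ∀ (i : Fin m) (x : Fin s) (p0 p1 p2 : VT m s T L),
      p0 ∉ As T L s i → p1 ∉ As T L s i → p2 ∉ As T L s i →
      RP G c [.inl (i, x), p2, p1, p0] → HasRainbowCopy G (SimpleGraph.pathGraph k) c)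
    (Hbb : ∀ b b' : Fin T, b ≠ b' → cp b = cp b' → G.Adj (.inr (.inl b)) (.inr (.inl b')) →
      (∀ l, par l ≠ b) → (∀ l, par l ≠ b') → HasRainbowCopy G (SimpleGraph.pathGraph k) c)
    (u v : VT m s T L) (huv : u ≠ v) (hnG : ¬ (cg cp par).Adj u v) (hadj : G.Adj u v) :
    HasRainbowCopy G (SimpleGraph.pathGraph k) c := by
  have aAB : ∀ (b : Fin T) (x : Fin s), G.Adj (.inr (.inl b)) (.inl (cp b, x)) :=
    fun b x => hG (show (cg cp par).Adj _ _ from rfl)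
  have aBL : ∀ (l : Fin L), G.Adj (.inr (.inl (par l))) (.inr (.inr l)) :=
    fun l => hG (show (cg cp par).Adj _ _ from rfl)
  have pickA : ∀ (b : Fin T) (γ : ℕ), ∃ x : Fin s,
      c s(.inr (.inl b), .inl (cp b, x)) ≠ γ := by
    intro b γ
    obtain ⟨w, hw, -, h2⟩ := pick1 hc (a := .inr (.inl b)) (As T L s (cp b)) ∅ {γ}
      (by intro w hw; obtain ⟨x, rfl⟩ := mem_As.1 hw; exact aAB b x)
      (by rw [card_As]; simp; omega)
    obtain ⟨x, rfl⟩ := mem_As.1 hw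
    exact ⟨x, by simpa using h2⟩
  have nBA : ∀ (b : Fin T) (i : Fin m), (.inr (.inl b) : VT m s T L) ∉ As T L s i := by
    intro b i h; obtain ⟨x, hx⟩ := mem_As.1 h; cases hx
  have nLA : ∀ (l : Fin L) (i : Fin m), (.inr (.inr l) : VT m s T L) ∉ As T L s i := by
    intro b i h; obtain ⟨x, hx⟩ := mem_As.1 h; cases hx
  have nAA : ∀ (i j : Fin m) (x : Fin s), j ≠ i → (.inl (j, x) : VT m s T L) ∉ As T L s i := by
    intro i j x hji h
    obtain ⟨y, hy⟩ := mem_As.1 h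
    exact hji (congrArg Prod.fst (Sum.inl.inj hy))
  have other : ∀ x : Fin s, ∃ y : Fin s, y ≠ x := by
    intro x
    haveI : Nontrivial (Fin s) := Fin.nontrivial_iff_two_le.2 hs
    exact exists_ne x
  -- a leaf joined to something
  have caseL : ∀ (l : Fin L) (y : VT m s T L), G.Adj (.inr (.inr l)) y →
      ¬ (cg cp par).Adj (.inr (.inr l)) y → HasRainbowCopy G (SimpleGraph.pathGraph k) c := by
    intro l y hy hny
    have hyb : y ≠ .inr (.inl (par l)) := by
      rintro rfl; exact hny (show (cg cp par).Adj _ _ from rfl)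
    by_cases hyA : y ∈ As T L s (cp (par l))
    · obtain ⟨x, rfl⟩ := mem_As.1 hyA
      obtain ⟨w, hw, h1, h2⟩ := pick1 hc (a := .inr (.inl (par l))) (Ls m s par (par l))
        {.inr (.inr l)} {c s(.inr (.inr l), .inl (cp (par l), x))}
        (by intro w hw; obtain ⟨l', hl', rfl⟩ := mem_Ls.1 hw; rw [← hl']; exact aBL l')
        (by rw [card_Ls]; have := hL l; simp; omega)
      obtain ⟨l', hl', rfl⟩ := mem_Ls.1 hw
      refine Ext (cp (par l)) x (.inr (.inr l')) (.inr (.inl (par l))) (.inr (.inr l))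
        (nLA _ _) (nBA _ _) (nLA _ _) (RP4 hc hy.symm (aBL l).symm ?_ (by simp) (by simp) ?_ ?_)
      · rw [← hl']; exact aBL l'
      · intro h; exact h1 (by simp [h])
      · intro h; exact h2 (by simp [h])
    · obtain ⟨x, hx⟩ := pickA (par l) (c s(.inr (.inr l), y))
      refine Ext (cp (par l)) x y (.inr (.inr l)) (.inr (.inl (par l)))
        hyA (nLA _ _) (nBA _ _) (RP4 hc (aAB _ _).symm (aBL l) hy (by simp) ?_ hyb.symm hx)
      rintro rfl; exact hyA (mem_As.2 ⟨x, rfl⟩)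
  -- start with `z, y, b`
  have caseB : ∀ (b : Fin T) (y z : VT m s T L), G.Adj (.inr (.inl b)) y → G.Adj y z →
      z ≠ .inr (.inl b) → y ∉ As T L s (cp b) → z ∉ As T L s (cp b) →
      HasRainbowCopy G (SimpleGraph.pathGraph k) c := by
    intro b y z h1 h2 h3 h4 h5
    obtain ⟨x, hx⟩ := pickA b (c s(y, z))
    refine Ext (cp b) x z y (.inr (.inl b)) h5 h4 (nBA _ _)
      (RP4 hc (aAB _ _).symm h1 h2 ?_ ?_ h3.symm hx)
    · rintro rfl; exact h4 (mem_As.2 ⟨x, rfl⟩)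
    · rintro rfl; exact h5 (mem_As.2 ⟨x, rfl⟩)
  have caseBA : ∀ (b : Fin T) (a : Fin m × Fin s), G.Adj (.inr (.inl b)) (.inl a) →
      ¬ (cg cp par).Adj (.inr (.inl b)) (.inl a) →
      HasRainbowCopy G (SimpleGraph.pathGraph k) c := by
    rintro b ⟨j, x⟩ h hn
    have hj : j ≠ cp b := by
      rintro rfl; exact hn (show (cg cp par).Adj _ _ from rfl)
    obtain ⟨y, hy⟩ := other x
    refine caseB b (.inl (j, x)) (.inl (j, y)) h (hG ?_) (by simp) (nAA _ _ _ hj) (nAA _ _ _ hj)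
    exact ⟨rfl, hy.symm⟩
  have caseBL : ∀ (b b' : Fin T) (l : Fin L), b ≠ b' → G.Adj (.inr (.inl b)) (.inr (.inl b')) →
      par l = b' → HasRainbowCopy G (SimpleGraph.pathGraph k) c := by
    intro b b' l hne h hl
    subst hl
    exact caseB b _ (.inr (.inr l)) h (aBL l) (by simp) (nBA _ _) (nLA _ _)
  rcases u with (a | b | l)
  · rcases v with (a' | b' | l')
    · obtain ⟨i, x⟩ := a
      obtain ⟨j, y⟩ := a'
      have hij : j ≠ i := by
        rintro rfl
        refine hnG ⟨rfl, ?_⟩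
        rintro rfl
        exact huv rfl
      obtain ⟨z, hz⟩ := other y
      obtain ⟨w, hw, -, h2⟩ := pick1 hc (a := .inl (j, z)) (Bs cp j) ∅
        {c s(.inl (j, y), .inl (i, x))}
        (by intro w hw; obtain ⟨b, rfl, rfl⟩ := mem_Bs.1 hw; exact (aAB b z).symm)
        (by rw [card_Bs]; have := hB j; simp; omega)
      obtain ⟨b, rfl, rfl⟩ := mem_Bs.1 hw
      refine Ext i x (.inr (.inl b)) (.inl (cp b, z)) (.inl (cp b, y)) (nBA _ _) (nAA _ _ _ hij)
        (nAA _ _ _ hij) (RP4 hc hadj (hG ⟨rfl, hz.symm⟩) (aAB b z).symm ?_ (by simp) (by simp) ?_)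
      · intro h; exact hij (congrArg Prod.fst (Sum.inl.inj h)).symm
      · intro h; exact h2 (by simp [h])
    · exact caseBA b' a hadj.symm (fun h => hnG h.symm)
    · exact caseL l' _ hadj.symm (fun h => hnG h.symm)
  · rcases v with (a' | b' | l')
    · exact caseBA b a' hadj hnG
    · have hne : b ≠ b' := by rintro rfl; exact huv rfl
      by_cases hcp : cp b = cp b'
      · by_cases h1 : ∃ l, par l = b'
        · obtain ⟨l, hl⟩ := h1
          exact caseBL b b' l hne hadj hl
        · by_cases h2 : ∃ l, par l = b
          · obtain ⟨l, hl⟩ := h2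
            exact caseBL b' b l hne.symm hadj.symm hl
          · push Not at h1 h2
            exact Hbb b b' hne hcp hadj h2 h1
      · exact caseB b _ (.inl (cp b', ⟨0, by omega⟩)) hadj (aAB _ _) (by simp) (nBA _ _)
          (nAA _ _ _ (Ne.symm hcp))
    · exact caseL l' _ hadj.symm (fun h => hnG h.symm)
  · exact caseL l v hadj hnG

theorem ext_odd (hs : 2 ≤ s)
    (hB : ∀ i : Fin m, 5 * s - 1 ≤ (Finset.univ.filter (fun b => cp b = i)).card)
    (G : SimpleGraph (VT m s T L)) (c : Sym2 (VT m s T L) → ℕ) (hG : cg cp par ≤ G)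
    (hc : IsProperEdgeColoring G c)
    (i : Fin m) (x : Fin s) (p0 p1 p2 : VT m s T L)
    (n0 : p0 ∉ As T L s i) (n1 : p1 ∉ As T L s i) (n2 : p2 ∉ As T L s i)
    (h : RP G c [.inl (i, x), p2, p1, p0]) :
    HasRainbowCopy G (SimpleGraph.pathGraph (2 * s + 3)) c := by
  classical
  have hBi := hB i
  rw [← card_Bs (s := s) (L := L)] at hBi
  have adjAB : ∀ a ∈ As T L s i, ∀ b ∈ Bs cp i, G.Adj a b := by
    intro a ha b hb
    obtain ⟨y, rfl⟩ := mem_As.1 ha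
    obtain ⟨b, hbi, rfl⟩ := mem_Bs.1 hb
    exact hG (show (cg cp par).Adj _ _ from hbi.symm ▸ rfl)
  have disAB : ∀ a ∈ As T L s i, a ∉ Bs cp i := by
    intro a ha hb
    obtain ⟨y, rfl⟩ := mem_As.1 ha
    obtain ⟨b, hb, hb'⟩ := mem_Bs.1 hb
    cases hb'
  have hxA : (.inl (i, x) : VT m s T L) ∈ As T L s i := mem_As.2 ⟨x, rfl⟩
  have hlen : ((As T L s i).erase (.inl (i, x))).toList.length = s - 1 := by
    rw [Finset.length_toList, Finset.card_erase_of_mem hxA, card_As]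
  have hmem : ∀ a ∈ ((As T L s i).erase (.inl (i, x))).toList,
      a ≠ .inl (i, x) ∧ a ∈ As T L s i := by
    intro a ha
    simpa using ha
  obtain ⟨z, q, t', r1, r2, r3, r4, r5, W', r6, r7⟩ := chain hc (Bs cp i) ∅
    ((As T L s i).erase (.inl (i, x))).toList (.inl (i, x)) p2 [p1, p0] {p0, p1, p2} h
    (by
      intro a ha
      rcases List.mem_cons.1 ha with rfl | ha
      · exact adjAB _ hxA
      · exact adjAB _ (hmem a ha).2)
    (Finset.nodup_toList _)
    (by
      intro a ha ha'
      obtain ⟨g1, g2⟩ := hmem a ha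
      simp only [List.mem_cons, List.not_mem_nil, or_false] at ha'
      rcases ha' with rfl | rfl | rfl | rfl
      · exact g1 rfl
      · exact n2 g2
      · exact n1 g2
      · exact n0 g2)
    (fun a ha => disAB a (hmem a ha).2)
    (by
      intro v hv hvB
      simp only [List.mem_cons, List.not_mem_nil, or_false] at hv
      rcases hv with rfl | rfl | rfl | rfl
      · exact absurd hvB (disAB _ hxA)
      · simp
      · simp
      · simp)
    (by simp)
    (by
      have : ({p0, p1, p2} : Finset (VT m s T L)).card ≤ 3 := Finset.card_le_three
      rw [hlen]
      simp only [List.length_cons, List.length_nil, Finset.card_empty]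
      omega)
  rw [hlen] at r3 r6
  simp only [List.length_cons, List.length_nil] at r3
  have : ({p0, p1, p2} : Finset (VT m s T L)).card ≤ 3 := Finset.card_le_three
  have hz : z ∈ As T L s i := by
    have := List.mem_of_getLast? r2
    rcases List.mem_cons.1 this with rfl | ha
    · exact hxA
    · exact (hmem z ha).2
  obtain ⟨b, -, -, hb⟩ := extend hc r1 (Bs cp i) W' (adjAB z hz) r7 (by omega)
  refine hb.hasCopy ?_
  simp only [List.length_cons]
  omega

theorem bb_odd (hs : 2 ≤ s)
    (hB : ∀ i : Fin m, 5 * s - 1 ≤ (Finset.univ.filter (fun b => cp b = i)).card)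
    (hub : Fin m → Fin T) (hcph : ∀ i, cp (hub i) = i)
    (hL : ∀ i, 2 * s + 4 ≤ (Finset.univ.filter (fun l => par l = hub i)).card)
    (G : SimpleGraph (VT m s T L)) (c : Sym2 (VT m s T L) → ℕ) (hG : cg cp par ≤ G)
    (hc : IsProperEdgeColoring G c)
    (b b' : Fin T) (hne : b ≠ b') (hcp : cp b = cp b')
    (hadj : G.Adj (.inr (.inl b)) (.inr (.inl b')))
    (hb : ∀ l, par l ≠ b) (hb' : ∀ l, par l ≠ b') :
    HasRainbowCopy G (SimpleGraph.pathGraph (2 * s + 3)) c := by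
  classical
  have hubL : ∀ i, ∃ l, par l = hub i := by
    intro i
    have : 0 < (Finset.univ.filter (fun l => par l = hub i)).card := by have := hL i; omega
    obtain ⟨l, hl⟩ := Finset.card_pos.1 this
    exact ⟨l, by simpa using hl⟩
  have hbh : ∀ i, b ≠ hub i := by
    rintro i rfl; obtain ⟨l, hl⟩ := hubL i; exact hb l hl
  have hbh' : ∀ i, b' ≠ hub i := by
    rintro i rfl; obtain ⟨l, hl⟩ := hubL i; exact hb' l hl
  obtain ⟨i, hi⟩ : ∃ i, cp b = i := ⟨_, rfl⟩
  have hi' : cp b' = i := by rw [← hcp, hi]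
  have hBi := hB i
  rw [← card_Bs (s := s) (L := L)] at hBi
  have adjAB : ∀ a ∈ As T L s i, ∀ b ∈ Bs cp i, G.Adj a b := by
    intro a ha b hb
    obtain ⟨y, rfl⟩ := mem_As.1 ha
    obtain ⟨b, hbi, rfl⟩ := mem_Bs.1 hb
    exact hG (show (cg cp par).Adj _ _ from hbi.symm ▸ rfl)
  have disAB : ∀ a ∈ As T L s i, a ∉ Bs cp i := by
    intro a ha hb
    obtain ⟨y, rfl⟩ := mem_As.1 ha
    obtain ⟨b, hb, hb'⟩ := mem_Bs.1 hb
    cases hb'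
  have hhB : (.inr (.inl (hub i)) : VT m s T L) ∈ Bs cp i := mem_Bs.2 ⟨_, hcph i, rfl⟩
  have hbB : (.inr (.inl b) : VT m s T L) ∈ Bs cp i := mem_Bs.2 ⟨_, hi, rfl⟩
  have hbB' : (.inr (.inl b') : VT m s T L) ∈ Bs cp i := mem_Bs.2 ⟨_, hi', rfl⟩
  -- the vertex next to the hub
  obtain ⟨a1, ha1, -, hcol1⟩ := pick1 hc (a := .inr (.inl (hub i))) (As T L s i) ∅
    {c s(.inr (.inl b), .inr (.inl b'))} (fun a ha => (adjAB a ha _ hhB).symm)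
    (by rw [card_As]; simp; omega)
  obtain ⟨a2, ha2, hne12⟩ : ∃ a2 ∈ As T L s i, a2 ≠ a1 :=
    Finset.exists_mem_ne (by rw [card_As]; omega) a1
  have main : ∀ d d' : VT m s T L, d ∈ Bs cp i → d' ∈ Bs cp i → G.Adj d d' →
      d ≠ .inr (.inl (hub i)) → d' ≠ .inr (.inl (hub i)) →
      c s(d, d') ≠ c s(.inr (.inl (hub i)), a1) →
      c s(a2, d) ≠ c s(.inr (.inl (hub i)), a1) →
      HasRainbowCopy G (SimpleGraph.pathGraph (2 * s + 3)) c := by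
    intro d d' hd hd' hdd hdh hdh' e1 e2
    have hRP : RP G c [a2, d, d'] := by
      have ne2 : a2 ≠ d' := by rintro rfl; exact disAB _ ha2 hd'
      have ad2 := adjAB a2 ha2 d hd
      have e3 : c s(d, a2) ≠ c s(d, d') := proper_ne hc ad2.symm hdd ne2
      rw [Sym2.eq_swap] at e3
      refine ⟨?_, ?_, ?_⟩
      · simp [ad2.ne, ne2, hdd.ne]
      · simp [ad2, hdd]
      · simp [ecols, e3]
    have hmem : ∀ a ∈ (((As T L s i).erase a2).erase a1).toList ++ [a1],
        a ≠ a2 ∧ a ∈ As T L s i := by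
      intro a ha
      simp only [List.mem_append, Finset.mem_toList, Finset.mem_erase, List.mem_singleton] at ha
      rcases ha with ha | rfl
      · exact ha.2
      · exact ⟨hne12.symm, ha1⟩
    have hlen : ((((As T L s i).erase a2).erase a1).toList ++ [a1]).length = s - 1 := by
      rw [List.length_append, Finset.length_toList, Finset.card_erase_of_mem,
        Finset.card_erase_of_mem ha2, card_As]
      · simp; omega
      · exact Finset.mem_erase.2 ⟨hne12.symm, ha1⟩
    obtain ⟨z, q, t', r1, r2, r3, r4, r5, -⟩ := chain hc (Bs cp i)
      {c s(.inr (.inl (hub i)), a1)}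
      ((((As T L s i).erase a2).erase a1).toList ++ [a1]) a2 d [d']
      {d, d', .inr (.inl (hub i))} hRP
      (by
        intro a ha
        rcases List.mem_cons.1 ha with rfl | ha
        · exact adjAB _ ha2
        · exact adjAB _ (hmem a ha).2)
      (by
        rw [List.nodup_append]
        refine ⟨Finset.nodup_toList _, by simp, ?_⟩
        intro a ha a' ha'
        simp only [Finset.mem_toList, Finset.mem_erase, List.mem_singleton] at ha ha'
        rw [ha']; exact ha.1)
      (by
        intro a ha ha'
        obtain ⟨g1, g2⟩ := hmem a ha
        simp only [List.mem_cons, List.not_mem_nil, or_false] at ha'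
        rcases ha' with rfl | rfl | rfl
        · exact g1 rfl
        · exact disAB _ g2 hd
        · exact disAB _ g2 hd')
      (fun a ha => disAB a (hmem a ha).2)
      (by
        intro v hv hvB
        simp only [List.mem_cons, List.not_mem_nil, or_false] at hv
        rcases hv with rfl | rfl | rfl
        · exact absurd hvB (disAB _ ha2)
        · simp
        · simp)
      (by
        intro γ hγ
        simp only [ecols, List.mem_cons, List.not_mem_nil, or_false] at hγ
        rcases hγ with rfl | rfl
        · simpa using e2
        · simpa using e1)
      (by
        have : ({d, d', .inr (.inl (hub i))} : Finset (VT m s T L)).card ≤ 3 :=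
          Finset.card_le_three
        rw [hlen]
        simp only [List.length_cons, List.length_nil, Finset.card_singleton]
        omega)
    rw [hlen] at r3
    simp only [List.length_cons, List.length_nil] at r3
    have hz : z = a1 := by
      have : (a2 :: ((((As T L s i).erase a2).erase a1).toList ++ [a1])).getLast? = some a1 := by
        rw [← List.cons_append, List.getLast?_concat]
      rw [this] at r2
      exact (Option.some.inj r2).symm
    subst hz
    have hnotA : ∀ w : VT m s T L, w ∉ As T L s i → w ≠ d → w ≠ d' →
        (w ∉ Bs cp i ∨ w = .inr (.inl (hub i))) → w ∉ z :: q :: t' := by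
      intro w h1 h2 h3 h4 hw
      rcases r4 w hw with hw | hw | hw
      · simp only [List.mem_cons, List.not_mem_nil, or_false] at hw
        rcases hw with rfl | rfl | rfl
        · exact h1 ha2
        · exact h2 rfl
        · exact h3 rfl
      · exact h1 (hmem w hw).2
      · rcases h4 with h4 | rfl
        · exact h4 hw.1
        · exact hw.2 (by simp)
    have r1' : RP G c (.inr (.inl (hub i)) :: z :: q :: t') := by
      refine r1.cons (adjAB z ha1 _ hhB).symm ?_ ?_
      · refine hnotA _ ?_ hdh.symm hdh'.symm (Or.inr rfl)
        intro h; exact disAB _ h hhB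
      · intro h; exact r5 _ h (by simp)
    have hLB : ∀ w ∈ Ls m s par (hub i), w ∉ Bs cp i := by
      intro w hw hw'
      obtain ⟨l, -, rfl⟩ := mem_Ls.1 hw
      obtain ⟨_, -, h⟩ := mem_Bs.1 hw'
      cases h
    obtain ⟨l, -, -, hl⟩ := extend hc r1' (Ls m s par (hub i)) ∅
      (by
        intro w hw
        obtain ⟨l, hl, rfl⟩ := mem_Ls.1 hw
        exact hG (show (cg cp par).Adj _ _ from hl))
      (by
        intro w hw hwL
        exfalso
        have hwB := hLB w hwL
        have hwA : w ∉ As T L s i := by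
          intro h
          obtain ⟨l, -, rfl⟩ := mem_Ls.1 hwL
          obtain ⟨_, h⟩ := mem_As.1 h
          cases h
        rcases List.mem_cons.1 hw with rfl | hw
        · exact hwB hhB
        · refine hnotA w hwA ?_ ?_ (Or.inl hwB) hw
          · rintro rfl; exact hwB hd
          · rintro rfl; exact hwB hd')
      (by
        rw [card_Ls]
        have := hL i
        simp only [List.length_cons, Finset.card_empty]
        omega)
    refine hl.hasCopy ?_
    simp only [List.length_cons]
    omega
  have hcol1' : c s(.inr (.inl b), .inr (.inl b')) ≠ c s(.inr (.inl (hub i)), a1) := by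
    intro h; exact hcol1 (by simp [h])
  by_cases h2 : c s(a2, .inr (.inl b)) = c s(.inr (.inl (hub i)), a1)
  · refine main (.inr (.inl b')) (.inr (.inl b)) hbB' hbB hadj.symm ?_ ?_ ?_ ?_
    · simpa using hbh' i
    · simpa using hbh i
    · rw [Sym2.eq_swap]; exact hcol1'
    · rw [← h2]
      exact proper_ne hc (adjAB a2 ha2 _ hbB') (adjAB a2 ha2 _ hbB) hadj.ne'
  · refine main (.inr (.inl b)) (.inr (.inl b')) hbB hbB' hadj ?_ ?_ hcol1' h2
    · simpa using hbh i
    · simpa using hbh' i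

theorem ext_even (hs : 2 ≤ s)
    (hB : ∀ i : Fin m, 5 * s + 4 ≤ (Finset.univ.filter (fun b => cp b = i)).card)
    (hR : ∀ i : Fin m, 7 ≤ (Finset.univ.filter (fun b => cp b = i ∧
      4 ≤ (Finset.univ.filter (fun l => par l = b)).card)).card)
    (G : SimpleGraph (VT m s T L)) (c : Sym2 (VT m s T L) → ℕ) (hG : cg cp par ≤ G)
    (hc : IsProperEdgeColoring G c)
    (i : Fin m) (x : Fin s) (p0 p1 p2 : VT m s T L)
    (n0 : p0 ∉ As T L s i) (n1 : p1 ∉ As T L s i) (n2 : p2 ∉ As T L s i)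
    (h : RP G c [.inl (i, x), p2, p1, p0]) :
    HasRainbowCopy G (SimpleGraph.pathGraph (2 * s + 4)) c := by
  classical
  have hBi := hB i
  rw [← card_Bs (s := s) (L := L)] at hBi
  have adjAB : ∀ a ∈ As T L s i, ∀ b ∈ Bs cp i, G.Adj a b := by
    intro a ha b hb
    obtain ⟨y, rfl⟩ := mem_As.1 ha
    obtain ⟨b, hbi, rfl⟩ := mem_Bs.1 hb
    exact hG (show (cg cp par).Adj _ _ from hbi.symm ▸ rfl)
  have disAB : ∀ a ∈ As T L s i, a ∉ Bs cp i := by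
    intro a ha hb
    obtain ⟨y, rfl⟩ := mem_As.1 ha
    obtain ⟨b, hb, hb'⟩ := mem_Bs.1 hb
    cases hb'
  have hxA : (.inl (i, x) : VT m s T L) ∈ As T L s i := mem_As.2 ⟨x, rfl⟩
  obtain ⟨a2, ha2, hne12⟩ : ∃ a2 ∈ As T L s i, a2 ≠ .inl (i, x) :=
    Finset.exists_mem_ne (by rw [card_As]; omega) _
  have hlen : ((((As T L s i).erase (.inl (i, x))).erase a2).toList ++ [a2]).length = s - 1 := by
    rw [List.length_append, Finset.length_toList, Finset.card_erase_of_mem,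
      Finset.card_erase_of_mem hxA, card_As]
    · simp; omega
    · exact Finset.mem_erase.2 ⟨hne12, ha2⟩
  have hmem : ∀ a ∈ (((As T L s i).erase (.inl (i, x))).erase a2).toList ++ [a2],
      a ≠ .inl (i, x) ∧ a ∈ As T L s i := by
    intro a ha
    simp only [List.mem_append, Finset.mem_toList, Finset.mem_erase, List.mem_singleton] at ha
    rcases ha with ha | rfl
    · exact ha.2
    · exact ⟨hne12, ha2⟩
  -- choose the hub at the far end
  let ps : VT m s T L → VT m s T L := fun v => match v with
    | .inr (.inr l) => .inr (.inl (par l))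
    | v => v
  let U : Finset ℕ := (ecols c [.inl (i, x), p2, p1, p0]).toFinset
  have hU : U.card ≤ 3 := by
    refine (List.toFinset_card_le _).trans ?_
    rw [ecols_length]; simp
  let R : Finset (VT m s T L) := (Finset.univ.filter (fun b => cp b = i ∧
      4 ≤ (Finset.univ.filter (fun l => par l = b)).card)).map ⟨fun b => .inr (.inl b), by
    intro a b h; simpa using h⟩
  have hRmem : ∀ v ∈ R, ∃ b, v = .inr (.inl b) ∧ cp b = i ∧
      4 ≤ (Finset.univ.filter (fun l => par l = b)).card := by
    intro v hv
    simp only [R, Finset.mem_map, Finset.mem_filter, Finset.mem_univ, true_and,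
      Function.Embedding.coeFn_mk] at hv
    obtain ⟨b, hb, rfl⟩ := hv
    exact ⟨b, rfl, hb⟩
  have hRc : 7 ≤ R.card := by simpa [R] using hR i
  have hW3 : ({ps p0, ps p1, ps p2} : Finset (VT m s T L)).card ≤ 3 := Finset.card_le_three
  obtain ⟨v2, hv2, hv2W, hv2U⟩ := pick1 hc (a := a2) R {ps p0, ps p1, ps p2} U
    (by
      intro v hv
      obtain ⟨b, rfl, hb, -⟩ := hRmem v hv
      exact adjAB a2 ha2 _ (mem_Bs.2 ⟨b, hb, rfl⟩))
    (by omega)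
  obtain ⟨b2, rfl, hb2, hb2c⟩ := hRmem v2 hv2
  have hb2B : (.inr (.inl b2) : VT m s T L) ∈ Bs cp i := mem_Bs.2 ⟨_, hb2, rfl⟩
  rw [← card_Ls (m := m) (s := s)] at hb2c
  have adjL : ∀ w ∈ Ls m s par b2, G.Adj (.inr (.inl b2)) w := by
    intro w hw
    obtain ⟨l, hl, rfl⟩ := mem_Ls.1 hw
    exact hG (show (cg cp par).Adj _ _ from hl)
  obtain ⟨w, hw, -, hwU⟩ := pick1 hc (Ls m s par b2) ∅ U adjL (by simp; omega)
  have hadjw := adjL w hw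
  obtain ⟨l2, hl2, rfl⟩ := mem_Ls.1 hw
  have hp : ∀ p ∈ [p2, p1, p0], p ≠ .inr (.inl b2) ∧ p ≠ .inr (.inr l2) := by
    intro p hp
    have : ps p ≠ .inr (.inl b2) := by
      intro hh
      apply hv2W
      rw [← hh]
      simp only [List.mem_cons, List.not_mem_nil, or_false] at hp
      rcases hp with rfl | rfl | rfl <;> simp
    constructor
    · rintro rfl; exact this rfl
    · rintro rfl; exact this (by simp [ps, hl2])
  have hpA : ∀ a ∈ As T L s i, a ∉ [p2, p1, p0] := by
    intro a ha hp
    simp only [List.mem_cons, List.not_mem_nil, or_false] at hp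
    rcases hp with rfl | rfl | rfl
    · exact n2 ha
    · exact n1 ha
    · exact n0 ha
  obtain ⟨z, q, t', r1, r2, r3, r4, r5, -⟩ := chain hc (Bs cp i)
    {c s(a2, .inr (.inl b2)), c s(.inr (.inl b2), .inr (.inr l2))}
    ((((As T L s i).erase (.inl (i, x))).erase a2).toList ++ [a2]) (.inl (i, x)) p2 [p1, p0]
    {.inr (.inl b2), p0, p1, p2} h
    (by
      intro a ha
      rcases List.mem_cons.1 ha with rfl | ha
      · exact adjAB _ hxA
      · exact adjAB _ (hmem a ha).2)
    (by
      rw [List.nodup_append]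
      refine ⟨Finset.nodup_toList _, by simp, ?_⟩
      intro a ha a' ha'
      simp only [Finset.mem_toList, Finset.mem_erase, List.mem_singleton] at ha ha'
      rw [ha']; exact ha.1)
    (by
      intro a ha ha'
      obtain ⟨g1, g2⟩ := hmem a ha
      rcases List.mem_cons.1 ha' with rfl | ha'
      · exact g1 rfl
      · exact hpA a g2 ha')
    (fun a ha => disAB a (hmem a ha).2)
    (by
      intro v hv hvB
      simp only [List.mem_cons, List.not_mem_nil, or_false] at hv
      rcases hv with rfl | rfl | rfl | rfl
      · exact absurd hvB (disAB _ hxA)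
      · simp
      · simp
      · simp)
    (by
      intro γ hγ hγ'
      have hγU : γ ∈ U := by simpa [U] using hγ
      simp only [Finset.mem_insert, Finset.mem_singleton] at hγ'
      rcases hγ' with rfl | rfl
      · exact hv2U hγU
      · exact hwU hγU)
    (by
      have h4 : ({.inr (.inl b2), p0, p1, p2} : Finset (VT m s T L)).card ≤ 4 :=
        Finset.card_le_four
      have h2 : ({c s(a2, .inr (.inl b2)), c s(.inr (.inl b2), .inr (.inr l2))} :
        Finset ℕ).card ≤ 2 := Finset.card_le_two
      rw [hlen]
      simp only [List.length_cons, List.length_nil]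
      omega)
  rw [hlen] at r3
  simp only [List.length_cons, List.length_nil] at r3
  have hz : z = a2 := by
    have : (.inl (i, x) :: ((((As T L s i).erase (.inl (i, x))).erase a2).toList ++
        [a2])).getLast? = some a2 := by
      rw [← List.cons_append, List.getLast?_concat]
    rw [this] at r2
    exact (Option.some.inj r2).symm
  subst hz
  have hadjz := adjAB z ha2 _ hb2B
  have hlA : (.inr (.inr l2) : VT m s T L) ∉ As T L s i := by
    intro h; obtain ⟨_, h⟩ := mem_As.1 h; cases h
  have hlB : (.inr (.inr l2) : VT m s T L) ∉ Bs cp i := by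
    intro h; obtain ⟨_, -, h⟩ := mem_Bs.1 h; cases h
  have r1' : RP G c (.inr (.inl b2) :: z :: q :: t') := by
    refine r1.cons hadjz.symm ?_ ?_
    · intro hh
      rcases r4 _ hh with hh | hh | hh
      · rcases List.mem_cons.1 hh with hh | hh
        · cases hh
        · exact (hp _ hh).1 rfl
      · exact disAB _ (hmem _ hh).2 hb2B
      · exact hh.2 (by simp)
    · rw [Sym2.eq_swap]
      intro hh; exact r5 _ hh (by simp)
  have r1'' : RP G c (.inr (.inr l2) :: .inr (.inl b2) :: z :: q :: t') := by
    refine r1'.cons hadjw.symm ?_ ?_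
    · intro hh
      rcases List.mem_cons.1 hh with hh | hh
      · cases hh
      rcases r4 _ hh with hh | hh | hh
      · rcases List.mem_cons.1 hh with hh | hh
        · cases hh
        · exact (hp _ hh).2 rfl
      · exact hlA (hmem _ hh).2
      · exact hlB hh.1
    · rw [Sym2.eq_swap, ecols, List.mem_cons, not_or]
      refine ⟨?_, ?_⟩
      · refine proper_ne hc hadjw hadjz.symm ?_
        rintro rfl
        exact hlA ha2
      · intro hh; exact r5 _ hh (by simp)
  refine r1''.hasCopy ?_
  simp only [List.length_cons]
  omega

end

/-! ### Transfer along bijections, edge counts, fibres -/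

theorem proper_pull {V W : Type} {G : SimpleGraph V} {G' : SimpleGraph W} (f : V → W)
    (hf : Function.Injective f) (h : ∀ a b, G.Adj a b → G'.Adj (f a) (f b)) {c : Sym2 W → ℕ}
    (hc : IsProperEdgeColoring G' c) : IsProperEdgeColoring G (fun e => c (Sym2.map f e)) := by
  have key : ∀ e ∈ G.edgeSet, Sym2.map f e ∈ G'.edgeSet := by
    intro e
    induction e using Sym2.ind with
    | _ a b => intro hab; exact h a b hab
  intro e₁ h₁ e₂ h₂ hne ⟨v, hv1, hv2⟩
  exact hc _ (key _ h₁) _ (key _ h₂) (fun hh => hne (Sym2.map.injective hf hh))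
    ⟨f v, Sym2.mem_map.2 ⟨v, hv1, rfl⟩, Sym2.mem_map.2 ⟨v, hv2, rfl⟩⟩

theorem copy_push {V W X : Type} {G : SimpleGraph V} {G' : SimpleGraph W} {H : SimpleGraph X}
    (f : V → W)
    (hf : Function.Injective f) (h : ∀ a b, G.Adj a b → G'.Adj (f a) (f b)) {c : Sym2 W → ℕ}
    (hc : HasRainbowCopy G H (fun e => c (Sym2.map f e))) : HasRainbowCopy G' H c := by
  obtain ⟨g, hg, hadj, hcol⟩ := hc
  refine ⟨f ∘ g, hf.comp hg, fun a b hab => h _ _ (hadj _ _ hab), ?_⟩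
  intro e₁ h₁ e₂ h₂ hne
  have := hcol e₁ h₁ e₂ h₂ hne
  simpa [Sym2.map_map] using this

theorem transfer {V X : Type} [Fintype V] {n E : ℕ} (G : SimpleGraph V) (H : SimpleGraph X)
    (hn : Fintype.card V = n) (hG : IsRainbowSat G H) (hE : G.edgeSet.ncard = E) :
    ∃ G' : SimpleGraph (Fin n), IsRainbowSat G' H ∧ G'.edgeSet.ncard = E := by
  classical
  let e : V ≃ Fin n := Fintype.equivFinOfCardEq hn
  refine ⟨G.comap e.symm, ⟨?_, ?_⟩, ?_⟩
  · obtain ⟨c, hc, hno⟩ := hG.1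
    refine ⟨fun x => c (Sym2.map e.symm x), proper_pull e.symm e.symm.injective
      (fun a b h => h) hc, fun hcopy => hno ?_⟩
    exact copy_push e.symm e.symm.injective (fun a b h => h) hcopy
  · intro u v huv hnadj c hc
    have hom : ∀ a b, (G ⊔ SimpleGraph.fromEdgeSet {s(e.symm u, e.symm v)}).Adj a b →
        (G.comap e.symm ⊔ SimpleGraph.fromEdgeSet {s(u, v)}).Adj (e a) (e b) := by
      intro a b h
      rw [SimpleGraph.sup_adj] at h ⊢
      rcases h with h | h
      · left; simpa using h
      · right
        rw [SimpleGraph.fromEdgeSet_adj] at h ⊢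
        refine ⟨?_, fun hh => h.2 (e.injective hh)⟩
        have h1 := h.1
        simp only [Set.mem_singleton_iff, Sym2.eq_iff] at h1 ⊢
        rcases h1 with ⟨rfl, rfl⟩ | ⟨rfl, rfl⟩ <;> simp
    exact copy_push e e.injective hom (hG.2 _ _ (fun hh => huv (e.symm.injective hh)) hnadj _
      (proper_pull e e.injective hom hc))
  · rw [← hE]
    have : (G.comap e.symm).edgeSet = Sym2.map e '' G.edgeSet := by
      ext x
      induction x using Sym2.ind with
      | _ a b =>
        constructor
        · intro h
          exact ⟨s(e.symm a, e.symm b), h, by simp⟩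
        · rintro ⟨y, hy, hxy⟩
          have : y = s(e.symm a, e.symm b) := by
            apply Sym2.map.injective e.injective
            rw [hxy]; simp
          subst this
          exact hy
    rw [this]
    exact Set.ncard_image_of_injective _ (Sym2.map.injective e.injective)

section
variable {m s T L : ℕ} {cp : Fin T → Fin m} {par : Fin L → Fin T}

theorem cg_ncard : (cg (s := s) cp par).edgeSet.ncard = m * s.choose 2 + s * T + L := by
  classical
  let φ : (Fin m × {e : Sym2 (Fin s) // ¬ e.IsDiag}) ⊕ ((Fin s × Fin T) ⊕ Fin L) →
      Sym2 (VT m s T L) := fun z => match z with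
    | .inl (i, e) => e.1.map (fun x => .inl (i, x))
    | .inr (.inl (x, b)) => s(.inl (cp b, x), .inr (.inl b))
    | .inr (.inr l) => s(.inr (.inl (par l)), .inr (.inr l))
  have hφ : Function.Injective φ := by
    rintro (⟨i, ⟨e, he⟩⟩ | ⟨x, b⟩ | l) (⟨i', ⟨e', he'⟩⟩ | ⟨x', b'⟩ | l') h
    · induction e using Sym2.ind with
      | _ a b =>
      induction e' using Sym2.ind with
      | _ a' b' =>
      simp only [φ, Sym2.map_mk, Sym2.eq_iff, Sum.inl.injEq, Prod.mk.injEq] at h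
      rcases h with ⟨⟨rfl, rfl⟩, ⟨_, rfl⟩⟩ | ⟨⟨rfl, rfl⟩, ⟨_, rfl⟩⟩
      · rfl
      · simp [Sym2.eq_swap]
    · induction e using Sym2.ind with
      | _ a b => simp [φ, Sym2.eq_iff] at h
    · induction e using Sym2.ind with
      | _ a b => simp [φ, Sym2.eq_iff] at h
    · induction e' using Sym2.ind with
      | _ a b => simp [φ, Sym2.eq_iff] at h
    · simp [φ] at h; simp [h]
    · simp [φ] at h
    · induction e' using Sym2.ind with
      | _ a b => simp [φ, Sym2.eq_iff] at h
    · simp [φ] at h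
    · simp [φ] at h; simp [h]
  have hr : (cg (s := s) cp par).edgeSet = Set.range φ := by
    ext z
    induction z using Sym2.ind with
    | _ u v =>
    constructor
    · intro h
      rcases u with (⟨i, x⟩ | b | l) <;> rcases v with (⟨i', x'⟩ | b' | l')
      · obtain ⟨h1, h2⟩ := h
        simp only at h1 h2
        subst h1
        exact ⟨.inl (i, ⟨s(x, x'), by simpa using h2⟩), rfl⟩
      · have h : cp b' = i := h
        subst h
        exact ⟨.inr (.inl (x, b')), rfl⟩
      · exact h.elim
      · have h : cp b = i' := h
        subst h
        exact ⟨.inr (.inl (x', b)), Sym2.eq_swap⟩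
      · exact h.elim
      · have h : par l' = b := h
        subst h
        exact ⟨.inr (.inr l'), rfl⟩
      · exact h.elim
      · have h : par l = b' := h
        subst h
        exact ⟨.inr (.inr l), Sym2.eq_swap⟩
      · exact h.elim
    · rintro ⟨z, hz⟩
      rw [← hz]
      rcases z with (⟨i', ⟨e', he'⟩⟩ | ⟨x', b'⟩ | l')
      · induction e' using Sym2.ind with
        | _ a b =>
        exact ⟨rfl, by simpa using he'⟩
      · exact (rfl : cp b' = cp b')
      · exact (rfl : par l' = par l')
  rw [hr, ← Nat.card_coe_set_eq, Nat.card_range_of_injective hφ, Nat.card_eq_fintype_card]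
  simp only [Fintype.card_sum, Fintype.card_prod, Fintype.card_fin, Sym2.card_subtype_not_diag]
  ring

theorem VT_card : Fintype.card (VT m s T L) = m * s + T + L := by
  simp [VT]; ring

theorem sat_odd (hs : 2 ≤ s)
    (hB : ∀ i : Fin m, 5 * s - 1 ≤ (Finset.univ.filter (fun b => cp b = i)).card)
    (hub : Fin m → Fin T) (hcph : ∀ i, cp (hub i) = i)
    (hpar : ∀ l, par l = hub (cp (par l)))
    (hL : ∀ i, 2 * s + 4 ≤ (Finset.univ.filter (fun l => par l = hub i)).card) :
    IsRainbowSat (cg (s := s) cp par) (SimpleGraph.pathGraph (2 * s + 3)) := by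
  refine ⟨free_odd (by omega) hub hpar, ?_⟩
  intro u v huv hn c hc
  refine common_sat (cp := cp) (par := par) hs (fun i => by have := hB i; omega) ?_ _ c
    le_sup_left hc ?_ ?_ u v huv hn ?_
  · intro l
    have := hL (cp (par l))
    rw [← hpar l] at this
    omega
  · intro i x p0 p1 p2 n0 n1 n2 h
    exact ext_odd hs hB _ c le_sup_left hc i x p0 p1 p2 n0 n1 n2 h
  · intro b b' hne hcp hadj hb hb'
    exact bb_odd hs hB hub hcph hL _ c le_sup_left hc b b' hne hcp hadj hb hb'
  · right
    simp [huv]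

theorem sat_even (hs : 2 ≤ s)
    (hB : ∀ i : Fin m, 5 * s + 4 ≤ (Finset.univ.filter (fun b => cp b = i)).card)
    (hR : ∀ i : Fin m, 7 ≤ (Finset.univ.filter (fun b => cp b = i ∧
      4 ≤ (Finset.univ.filter (fun l => par l = b)).card)).card)
    (hL : ∀ b, 3 ≤ (Finset.univ.filter (fun l => par l = b)).card) :
    IsRainbowSat (cg (s := s) cp par) (SimpleGraph.pathGraph (2 * s + 4)) := by
  refine ⟨free_even, ?_⟩
  intro u v huv hn c hc
  refine common_sat (cp := cp) (par := par) hs (fun i => by have := hB i; omega)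
    (fun l => hL _) _ c
    le_sup_left hc ?_ ?_ u v huv hn ?_
  · intro i x p0 p1 p2 n0 n1 n2 h
    exact ext_even hs hB hR _ c le_sup_left hc i x p0 p1 p2 n0 n1 n2 h
  · intro b b' hne hcp hadj hb hb'
    have h3 : 0 < (Finset.univ.filter (fun l => par l = b)).card := by have := hL b; omega
    obtain ⟨l, hl⟩ := Finset.card_pos.1 h3
    exact absurd (Finset.mem_filter.1 hl).2 (hb l)
  · right
    simp [huv]

end

theorem exists_fibres {L T : ℕ} (hT : 0 < T) (μ : Fin T → ℕ) (h : ∑ b, μ b ≤ L) :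
    ∃ par : Fin L → Fin T, ∀ b, μ b ≤ (Finset.univ.filter (fun l => par l = b)).card := by
  classical
  have hc : Fintype.card (Σ b, Fin (μ b)) ≤ Fintype.card (Fin L) := by simpa using h
  obtain ⟨e⟩ := Function.Embedding.nonempty_of_card_le hc
  haveI : Nonempty (Fin T) := ⟨⟨0, hT⟩⟩
  refine ⟨fun l => if hl : ∃ z, e z = l then hl.choose.1 else ⟨0, hT⟩, fun b => ?_⟩
  have hsub : (Finset.univ : Finset (Fin (μ b))).image (fun j => e ⟨b, j⟩) ⊆
      Finset.univ.filter (fun l => (if hl : ∃ z, e z = l then hl.choose.1 else ⟨0, hT⟩) = b) := by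
    intro l hl
    obtain ⟨j, _, rfl⟩ := Finset.mem_image.1 hl
    rw [Finset.mem_filter]
    refine ⟨Finset.mem_univ _, ?_⟩
    have hex : ∃ z, e z = e ⟨b, j⟩ := ⟨_, rfl⟩
    rw [dif_pos hex]
    have := e.injective hex.choose_spec
    rw [this]
  have := Finset.card_le_card hsub
  rw [Finset.card_image_of_injective] at this
  · simpa using this
  · intro j j' hj
    have := e.injective hj
    simpa using this

/-- odd case, with parameters -/
theorem odd_params {m s T n E : ℕ} (hs : 2 ≤ s) (hm : 0 < m) (hT : m * (5 * s - 1) ≤ T)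
    (hn : m * s + T + m * (2 * s + 4) ≤ n)
    (hE : m * s.choose 2 + s * T + n = m * s + T + E) :
    ∃ G : SimpleGraph (Fin n),
      IsRainbowSat G (SimpleGraph.pathGraph (2 * s + 3)) ∧ G.edgeSet.ncard = E := by
  classical
  obtain ⟨cp, hcp⟩ := exists_fibres (L := T) hm (fun _ => 5 * s - 1) (by simpa using hT)
  obtain ⟨L, rfl⟩ : ∃ L, n = m * s + T + L := ⟨n - (m * s + T), by omega⟩
  obtain ⟨p, hp⟩ := exists_fibres (L := L) hm (fun _ => 2 * s + 4) (by
    simp only [Finset.sum_const, Finset.card_univ, Fintype.card_fin, smul_eq_mul]; omega)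
  have hsur : ∀ i, ∃ b, cp b = i := by
    intro i
    have h3 : 0 < (Finset.univ.filter (fun b => cp b = i)).card := by have := hcp i; omega
    obtain ⟨l, hl⟩ := Finset.card_pos.1 h3
    exact ⟨l, (Finset.mem_filter.1 hl).2⟩
  choose hub hhub using hsur
  refine transfer (cg (s := s) cp (hub ∘ p)) _ VT_card (sat_odd hs hcp hub hhub ?_ ?_) ?_
  · intro l; simp [hhub]
  · intro i
    refine (hp i).trans (Finset.card_le_card ?_)
    intro l hl
    simp only [Finset.mem_filter, Finset.mem_univ, true_and] at hl ⊢
    simp [hl]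
  · rw [cg_ncard]; omega

/-- even case, with parameters -/
theorem even_params {m s T n E : ℕ} (hs : 2 ≤ s) (hm : 0 < m) (hT : m * (5 * s + 4) ≤ T)
    (hn : m * s + T + 4 * T ≤ n)
    (hE : m * s.choose 2 + s * T + n = m * s + T + E) :
    ∃ G : SimpleGraph (Fin n),
      IsRainbowSat G (SimpleGraph.pathGraph (2 * s + 4)) ∧ G.edgeSet.ncard = E := by
  classical
  obtain ⟨cp, hcp⟩ := exists_fibres (L := T) hm (fun _ => 5 * s + 4) (by simpa using hT)
  obtain ⟨L, rfl⟩ : ∃ L, n = m * s + T + L := ⟨n - (m * s + T), by omega⟩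
  have hT0 : 0 < T := lt_of_lt_of_le (Nat.mul_pos hm (by omega)) hT
  obtain ⟨p, hp⟩ := exists_fibres (L := L) hT0 (fun _ => 4) (by
    simp only [Finset.sum_const, Finset.card_univ, Fintype.card_fin, smul_eq_mul]; omega)
  refine transfer (cg (s := s) cp p) _ VT_card (sat_even hs hcp ?_ ?_) ?_
  · intro i
    have : Finset.univ.filter (fun b => cp b = i) ⊆ Finset.univ.filter (fun b => cp b = i ∧
      4 ≤ (Finset.univ.filter (fun l => p l = b)).card) := by
      intro b hb
      rw [Finset.mem_filter] at hb ⊢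
      exact ⟨hb.1, hb.2, hp b⟩
    have := Finset.card_le_card this
    have := hcp i
    omega
  · intro b; have := hp b; omega
  · rw [cg_ncard]; omega

/-- the case `k = 8` -/
theorem eight_params {n : ℕ} (hn : 112 ≤ n) :
    ∃ G : SimpleGraph (Fin n),
      IsRainbowSat G (SimpleGraph.pathGraph 8) ∧ G.edgeSet.ncard = n + 24 := by
  classical
  obtain ⟨L, rfl⟩ : ∃ L, n = 1 * 2 + 25 + L := ⟨n - (1 * 2 + 25), by omega⟩
  obtain ⟨p, hp⟩ := exists_fibres (L := L) (T := 25) (by norm_num)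
    (fun b => if b.1 < 7 then 4 else 3) (by
      have : (∑ b : Fin 25, if b.1 < 7 then 4 else 3) = 82 := by decide
      omega)
  have hcp : ∀ i : Fin 1, (Finset.univ.filter (fun b : Fin 25 => (0 : Fin 1) = i)).card = 25 := by
    decide
  refine transfer (cg (s := 2) (fun _ => (0 : Fin 1)) p) _ VT_card
    (sat_even (s := 2) le_rfl (fun i => by rw [hcp i]; norm_num) ?_ ?_) ?_
  · intro i
    have : Finset.univ.filter (fun b : Fin 25 => b.1 < 7) ⊆
      Finset.univ.filter (fun b => (0 : Fin 1) = i ∧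
        4 ≤ (Finset.univ.filter (fun l => p l = b)).card) := by
      intro b hb
      rw [Finset.mem_filter] at hb ⊢
      refine ⟨hb.1, Subsingleton.elim _ _, ?_⟩
      have := hp b
      rwa [if_pos hb.2] at this
    have := Finset.card_le_card this
    have h7 : (Finset.univ.filter (fun b : Fin 25 => b.1 < 7)).card = 7 := by decide
    omega
  · intro b
    have := hp b
    refine le_trans ?_ this
    show 3 ≤ if b.1 < 7 then 4 else 3
    split_ifs <;> norm_num
  · rw [cg_ncard]
    have : Nat.choose 2 2 = 1 := rfl
    omega

/-! ### The parameters -/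

theorem num_odd (q : ℕ) : 11 * q ^ 2 + 29 * q + 18 ≤ 16 * 4 ^ q + 2 := by
  induction q with
  | zero => norm_num
  | succ q ih => rw [pow_succ 4]; nlinarith

theorem two_choose_two (q : ℕ) : 2 * (q + 1).choose 2 = (q + 1) * q := by
  have := Nat.triangle_succ q
  rw [Nat.choose_two_right]
  have h2 : 2 ∣ (q + 1) * q := by
    rw [mul_comm]; exact even_iff_two_dvd.1 (Nat.even_mul_succ_self q)
  rw [Nat.add_sub_cancel, Nat.mul_div_cancel' h2]

theorem odd_case (q n : ℕ) (hn : (2 * q + 6) * 2 ^ (2 * q + 3) ≤ n) :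
    ∃ G : SimpleGraph (Fin n),
      IsRainbowSat G (SimpleGraph.pathGraph (2 * (q + 2) + 3)) ∧
      G.edgeSet.ncard = n + (2 * q + 2) * 2 ^ (2 * q + 2) := by
  have hp3 : 2 ^ (2 * q + 3) = 8 * 4 ^ q := by
    rw [pow_add, pow_mul]; norm_num; ring
  have hp2 : 2 ^ (2 * q + 2) = 4 * 4 ^ q := by
    rw [pow_add, pow_mul]; norm_num; ring
  rw [hp3] at hn
  rw [hp2]
  have h1 := num_odd q
  have hd := two_choose_two q
  have hch : (q + 2).choose 2 = (q + 1) + (q + 1).choose 2 := by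
    rw [Nat.choose_succ_succ' (q + 1) 1]; simp
  generalize (q + 1).choose 2 = d at *
  generalize 4 ^ q = P at *
  obtain ⟨T, hT⟩ : ∃ T, T + d = 8 * P + 1 := ⟨8 * P + 1 - d, by
    have : d ≤ 8 * P + 1 := by nlinarith
    omega⟩
  refine odd_params (m := q + 1) (T := T) (by omega) (by omega) ?_ ?_ ?_
  · have : 5 * (q + 2) - 1 = 5 * q + 9 := by omega
    rw [this]
    nlinarith
  · nlinarith [Nat.zero_le (q * P)]
  · rw [hch]
    have : d = 8 * P + 1 - T := by omega
    have h2 : (q + 1) * (T + d) = (q + 1) * (8 * P + 1) := by rw [hT]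
    nlinarith

theorem num_even (r : ℕ) (hr : 3 ≤ r) : 11 * r ^ 2 + 17 * r ≤ 4 * 4 ^ r := by
  induction r, hr using Nat.le_induction with
  | base => norm_num
  | succ q hq ih => rw [pow_succ 4]; nlinarith

theorem even_case (r n : ℕ) (hr : 3 ≤ r) (hn : (2 * r + 5) * 2 ^ (2 * r + 2) ≤ n) :
    ∃ G : SimpleGraph (Fin n),
      IsRainbowSat G (SimpleGraph.pathGraph (2 * (r + 1) + 4)) ∧
      G.edgeSet.ncard = n + (2 * r + 1) * 2 ^ (2 * r + 1) := by
  have hp3 : 2 ^ (2 * r + 2) = 4 * 4 ^ r := by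
    rw [pow_add, pow_mul]; norm_num; ring
  have hp2 : 2 ^ (2 * r + 1) = 2 * 4 ^ r := by
    rw [pow_add, pow_mul]; norm_num; ring
  rw [hp3] at hn
  rw [hp2]
  have h1 := num_even r hr
  obtain ⟨q, rfl⟩ : ∃ q, r = q + 1 := ⟨r - 1, by omega⟩
  have hd := two_choose_two q
  have hch : (q + 1 + 1).choose 2 = (q + 1) + (q + 1).choose 2 := by
    rw [Nat.choose_succ_succ' (q + 1) 1]; simp
  generalize (q + 1).choose 2 = d at *
  generalize 4 ^ (q + 1) = Q at *
  obtain ⟨c, w, hc1, hc2, hw⟩ : ∃ c w, 1 ≤ c ∧ c ≤ q + 1 ∧ c + Q = (q + 1) * w := by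
    refine ⟨q + 1 - Q % (q + 1), Q / (q + 1) + 1, ?_, ?_, ?_⟩
    · have := Nat.mod_lt Q (show 0 < q + 1 by omega); omega
    · omega
    · have := Nat.mod_lt Q (show 0 < q + 1 by omega)
      have h2 := Nat.div_add_mod Q (q + 1)
      rw [mul_add]; omega
  have hcq : c * q ≤ (q + 1) * q := Nat.mul_le_mul_right _ hc2
  have hcq2 : c * (5 * (q + 1 + 1) + 4) ≤ (q + 1) * (5 * (q + 1 + 1) + 4) :=
    Nat.mul_le_mul_right _ hc2
  have hcq3 : c * (q + 1 + 1) ≤ (q + 1) * (q + 1 + 1) :=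
    Nat.mul_le_mul_right _ hc2
  obtain ⟨T, hT⟩ : ∃ T, T + c * q = 2 * w + 4 * Q := ⟨2 * w + 4 * Q - c * q, by
    have : c * q ≤ 2 * w + 4 * Q := by nlinarith
    omega⟩
  have hw3 : 3 * w ≤ (q + 1) * w := Nat.mul_le_mul_right _ hr
  have hQ : 3 * Q ≤ (q + 1) * Q := Nat.mul_le_mul_right _ hr
  refine even_params (m := 2 * c) (T := T) (by omega) (by omega) ?_ ?_ ?_
  · nlinarith
  · nlinarith
  · rw [hch]
    have h2 : (q + 1) * (T + c * q) = (q + 1) * (2 * w + 4 * Q) := by rw [hT]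
    have h3 : 2 * c * d = c * ((q + 1) * q) := by rw [← hd]; ring
    nlinarith

theorem even_three (n : ℕ) (hn : 576 ≤ n) :
    ∃ G : SimpleGraph (Fin n),
      IsRainbowSat G (SimpleGraph.pathGraph 10) ∧ G.edgeSet.ncard = n + 160 := by
  have : Nat.choose 3 2 = 3 := rfl
  exact even_params (m := 1) (s := 3) (T := 80) (by omega) (by omega) (by omega) (by omega)
    (by omega)

/-! ### The case `k = 6` -/

/-- `K₄` with pendant leaves -/
def kg {L : ℕ} (par : Fin L → Fin 4) : SimpleGraph (Fin 4 ⊕ Fin L) where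
  Adj u v := match u, v with
    | .inl a, .inl a' => a ≠ a'
    | .inl a, .inr l => par l = a
    | .inr l, .inl a => par l = a
    | _, _ => False
  symm := ⟨by
    rintro (a | l) (a' | l') h
    all_goals first | exact h | exact Ne.symm h⟩
  loopless := ⟨by
    rintro (a | l) h
    · exact h rfl
    · exact h⟩

theorem kg_ncard {L : ℕ} (par : Fin L → Fin 4) : (kg par).edgeSet.ncard = 6 + L := by
  classical
  let φ : {e : Sym2 (Fin 4) // ¬ e.IsDiag} ⊕ Fin L →
      Sym2 (Fin 4 ⊕ Fin L) := fun z => match z with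
    | .inl e => e.1.map .inl
    | .inr l => s(.inl (par l), .inr l)
  have hφ : Function.Injective φ := by
    rintro (⟨e, he⟩ | l) (⟨e', he'⟩ | l') h
    · have := Sym2.map.injective (Sum.inl_injective (α := Fin 4) (β := Fin L)) h
      exact congrArg Sum.inl (Subtype.ext this)
    · induction e using Sym2.ind with
      | _ a b => simp [φ] at h
    · induction e' using Sym2.ind with
      | _ a b => simp [φ] at h
    · simp [φ] at h; simp [h]
  have hr : (kg par).edgeSet = Set.range φ := by
    ext z
    induction z using Sym2.ind with
    | _ u v =>
    constructor
    · intro h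
      rcases u with (x | l) <;> rcases v with (x' | l')
      · have h : x ≠ x' := h
        exact ⟨.inl ⟨s(x, x'), by simpa using h⟩, rfl⟩
      · have h : par l' = x := h
        subst h
        exact ⟨.inr l', rfl⟩
      · have h : par l = x' := h
        subst h
        exact ⟨.inr l, Sym2.eq_swap⟩
      · exact h.elim
    · rintro ⟨z, hz⟩
      rw [← hz]
      rcases z with (⟨e', he'⟩ | l')
      · induction e' using Sym2.ind with
        | _ a b =>
        have : a ≠ b := by simpa using he'
        exact this
      · exact (rfl : par l' = par l')
  rw [hr, ← Nat.card_coe_set_eq, Nat.card_range_of_injective hφ, Nat.card_eq_fintype_card]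
  simp only [Fintype.card_sum, Fintype.card_fin, Sym2.card_subtype_not_diag]
  rfl

theorem kg_free {L : ℕ} (par : Fin L → Fin 4) :
    ∃ c : Sym2 (Fin 4 ⊕ Fin L) → ℕ, IsProperEdgeColoring (kg par) c ∧
      ¬ HasRainbowCopy (kg par) (SimpleGraph.pathGraph 6) c := by
  let d : (Fin 4 ⊕ Fin L) → (Fin 4 ⊕ Fin L) → ℕ := fun u v => match u, v with
    | .inl a, .inl a' => a.1 ^^^ a'.1
    | .inl _, .inr l => 4 + l.1
    | .inr l, .inl _ => 4 + l.1
    | _, _ => 0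
  have hd : ∀ u v, d u v = d v u := by
    rintro (a | l) (a' | l')
    · exact Nat.xor_comm _ _
    · rfl
    · rfl
    · rfl
  have hx : ∀ a b : Fin 4, a.1 ^^^ b.1 < 4 := by decide
  have hx2 : ∀ a b b' : Fin 4, a.1 ^^^ b.1 = a.1 ^^^ b'.1 → b = b' := by decide
  have hx3 : ∀ a b x y : Fin 4, a ≠ b → a ≠ x → a ≠ y → b ≠ x → b ≠ y → x ≠ y →
    a.1 ^^^ b.1 = x.1 ^^^ y.1 := by
    have : ∀ a b x y : Fin 4, (a ≠ b ∧ a ≠ x ∧ a ≠ y ∧ b ≠ x ∧ b ≠ y ∧ x ≠ y) →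
      a.1 ^^^ b.1 = x.1 ^^^ y.1 := by decide
    exact fun a b x y h1 h2 h3 h4 h5 h6 => this a b x y ⟨h1, h2, h3, h4, h5, h6⟩
  have hstar : ∀ v b b', (kg par).Adj v b → (kg par).Adj v b' → d v b = d v b' → b = b' := by
    rintro (a | l) (b | l') (b' | l'') h h' e
    · rw [hx2 a b b' e]
    · have e : a.1 ^^^ b.1 = 4 + l''.1 := e
      have := hx a b; omega
    · have e : 4 + l'.1 = a.1 ^^^ b'.1 := e
      have := hx a b'; omega
    · have e : 4 + l'.1 = 4 + l''.1 := e
      congr 1; apply Fin.ext; omega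
    · have h : par l = b := h
      have h' : par l = b' := h'
      rw [← h, ← h']
    · exact h'.elim
    · exact h.elim
    · exact h.elim
  refine ⟨fun e => Sym2.lift ⟨d, hd⟩ e, ?_, ?_⟩
  · intro e₁ h₁ e₂ h₂ hne ⟨v, hv1, hv2⟩ heq
    obtain ⟨b, rfl⟩ := hv1
    obtain ⟨b', rfl⟩ := hv2
    apply hne
    rw [hstar v b b' h₁ h₂ heq]
  · rintro ⟨f, hf, hadj, hcol⟩
    have hadj' : ∀ i j : Fin 6, i.1 + 1 = j.1 → (kg par).Adj (f i) (f j) :=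
      fun i j hij => hadj i j (SimpleGraph.pathGraph_adj.2 (Or.inl hij))
    have core : ∀ i j r : Fin 6, i.1 + 1 = j.1 → j.1 + 1 = r.1 → ∃ x, f j = .inl x := by
      intro i j r hij hjr
      have e1 := (hadj' i j hij).symm
      have e2 := hadj' j r hjr
      rcases hj : f j with x | l
      · exact ⟨x, rfl⟩
      · exfalso
        rw [hj] at e1 e2
        have : f i = f r := by
          rcases hi : f i with x | l1 <;> rcases hr : f r with y | l2 <;> rw [hi] at e1 <;>
            rw [hr] at e2
          · have e1 : par l = x := e1
            have e2 : par l = y := e2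
            rw [← e1, ← e2]
          · exact e2.elim
          · exact e1.elim
          · exact e1.elim
        have := congrArg Fin.val (hf this)
        omega
    obtain ⟨x1, h1⟩ := core 0 1 2 rfl rfl
    obtain ⟨x2, h2⟩ := core 1 2 3 rfl rfl
    obtain ⟨x3, h3⟩ := core 2 3 4 rfl rfl
    obtain ⟨x4, h4⟩ := core 3 4 5 rfl rfl
    have dist : ∀ (i j : Fin 6) (x y : Fin 4), f i = .inl x → f j = .inl y → i ≠ j → x ≠ y := by
      intro i j x y hi hj hij hxy
      exact hij (hf (by rw [hi, hj, hxy]))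
    refine hcol s(1, 2) (SimpleGraph.pathGraph_adj.2 (Or.inl rfl)) s(3, 4)
      (SimpleGraph.pathGraph_adj.2 (Or.inl rfl)) (by decide) ?_
    simp only [Sym2.map_mk, h1, h2, h3, h4]
    exact hx3 x1 x2 x3 x4 (dist _ _ _ _ h1 h2 (by decide)) (dist _ _ _ _ h1 h3 (by decide))
      (dist _ _ _ _ h1 h4 (by decide)) (dist _ _ _ _ h2 h3 (by decide))
      (dist _ _ _ _ h2 h4 (by decide)) (dist _ _ _ _ h3 h4 (by decide))

section
variable {L : ℕ} {par : Fin L → Fin 4} {G : SimpleGraph (Fin 4 ⊕ Fin L)}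
  {c : Sym2 (Fin 4 ⊕ Fin L) → ℕ}

theorem six_pick (hG : kg par ≤ G) (hc : IsProperEdgeColoring G c)
    (hp : ∀ a, 4 ≤ (Finset.univ.filter (fun l => par l = a)).card) (a : Fin 4)
    (W : Finset (Fin L)) (U : Finset ℕ) (hWU : W.card + U.card < 4) :
    ∃ l, par l = a ∧ l ∉ W ∧ c s(.inl a, .inr l) ∉ U := by
  classical
  obtain ⟨b, hb, h1, h2⟩ := pick1 hc (a := .inl a)
    ((Finset.univ.filter (fun l => par l = a)).map ⟨Sum.inr, Sum.inr_injective⟩)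
    (W.map ⟨Sum.inr, Sum.inr_injective⟩) U (by
      intro b hb
      obtain ⟨l, hl, rfl⟩ := Finset.mem_map.1 hb
      exact hG (show (kg par).Adj (.inl a) (.inr l) from (Finset.mem_filter.1 hl).2)) (by
      have := hp a
      simp only [Finset.card_map]; omega)
  obtain ⟨l, hl, rfl⟩ := Finset.mem_map.1 hb
  exact ⟨l, (Finset.mem_filter.1 hl).2, fun h => h1 (Finset.mem_map.2 ⟨l, h, rfl⟩), h2⟩

theorem six_core (hG : kg par ≤ G) (hc : IsProperEdgeColoring G c) (z u : Fin 4) (δ : ℕ) :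
    ∃ v, v ≠ z ∧ v ≠ u ∧ c s(.inl z, .inl v) ≠ δ := by
  obtain ⟨v1, v2, h1, h2, h3, h4, h5⟩ : ∃ v1 v2 : Fin 4, v1 ≠ z ∧ v1 ≠ u ∧ v2 ≠ z ∧ v2 ≠ u ∧
    v1 ≠ v2 := by revert z u; decide
  have hne : c s(.inl z, .inl v1) ≠ c s(.inl z, .inl v2) :=
    proper_ne hc (hG (show (kg par).Adj (.inl z) (.inl v1) from h1.symm))
      (hG (show (kg par).Adj (.inl z) (.inl v2) from h3.symm)) (by simpa using h5)
  by_cases h : c s(.inl z, .inl v1) = δ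
  · exact ⟨v2, h3, h4, fun hh => hne (h.trans hh.symm)⟩
  · exact ⟨v1, h1, h2, h⟩

theorem six_leaf_core (hG : kg par ≤ G) (hc : IsProperEdgeColoring G c)
    (hp : ∀ a, 4 ≤ (Finset.univ.filter (fun l => par l = a)).card) (l : Fin L) (v : Fin 4)
    (hv : par l ≠ v) (hadj : G.Adj (.inr l) (.inl v)) :
    HasRainbowCopy G (SimpleGraph.pathGraph 6) c := by
  classical
  have aK : ∀ x y : Fin 4, x ≠ y → G.Adj (.inl x) (.inl y) :=
    fun x y h => hG (show (kg par).Adj (.inl x) (.inl y) from h)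
  have aL : ∀ l, G.Adj (.inl (par l)) (.inr l) :=
    fun l => hG (show (kg par).Adj (.inl (par l)) (.inr l) from rfl)
  obtain ⟨w, hwv, hwu, hw⟩ := six_core hG hc v (par l) (c s(.inl (par l), .inr l))
  obtain ⟨l1, hl1, hl1W, hl1U⟩ := six_pick hG hc hp (par l) {l}
    {c s(.inr l, .inl v), c s(.inl v, .inl w)} (by
      have := Finset.card_le_two (a := c s(.inr l, .inl v)) (b := c s(.inl v, .inl w))
      rw [Finset.card_singleton]; omega)
  simp only [Finset.mem_singleton, Finset.mem_insert, not_or] at hl1W hl1U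
  have aL1 := aL l1
  rw [hl1] at aL1
  have r4 : RP G c [.inl v, .inr l, .inl (par l), .inr l1] :=
    RP4 hc hadj.symm (aL l).symm aL1 (by simpa using hv.symm) (by simp)
      (by simpa using Ne.symm hl1W) (Ne.symm hl1U.1)
  have e1 : c s(.inl v, .inl w) ≠ c s(.inl v, .inr l) :=
    proper_ne hc (aK _ _ hwv.symm) hadj.symm (by simp)
  have r5 : RP G c (.inl w :: [.inl v, .inr l, .inl (par l), .inr l1]) := by
    refine r4.cons (aK _ _ hwv) (by simp [hwv, hwu]) ?_
    rw [Sym2.eq_swap]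
    simp only [ecols, List.mem_cons, List.not_mem_nil, or_false, not_or]
    refine ⟨e1, ?_, fun h => hl1U.2 h.symm⟩
    rw [Sym2.eq_swap (a := Sum.inr l)]
    exact hw
  obtain ⟨l2, hl2, -, hl2U⟩ := six_pick hG hc hp w ∅
    {c s(.inl v, .inr l), c s(.inr l, .inl (par l)), c s(.inl (par l), .inr l1)} (by
      have := Finset.card_le_three (a := c s(.inl v, .inr l)) (b := c s(.inr l, .inl (par l)))
        (c := c s(.inl (par l), .inr l1))
      rw [Finset.card_empty]; omega)
  simp only [Finset.mem_singleton, Finset.mem_insert, not_or] at hl2U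
  have aL2 := aL l2
  rw [hl2] at aL2
  have e2 : c s(.inl w, .inr l2) ≠ c s(.inl w, .inl v) :=
    proper_ne hc aL2 (aK _ _ hwv) (by simp)
  refine RP.hasCopy (l := .inr l2 :: .inl w :: [.inl v, .inr l, .inl (par l), .inr l1]) ?_ rfl
  refine r5.cons aL2.symm ?_ ?_
  · have n1 : l2 ≠ l := by rintro rfl; exact hwu hl2.symm
    have n2 : l2 ≠ l1 := by rintro rfl; exact hwu (hl2.symm.trans hl1)
    simp [n1, n2]
  · rw [Sym2.eq_swap]
    simp only [ecols, List.mem_cons, List.not_mem_nil, or_false, not_or]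
    exact ⟨e2, hl2U⟩

theorem six_leaf_leaf (hG : kg par ≤ G) (hc : IsProperEdgeColoring G c)
    (hp : ∀ a, 4 ≤ (Finset.univ.filter (fun l => par l = a)).card) (l y : Fin L)
    (hly : l ≠ y) (hadj : G.Adj (.inr l) (.inr y)) :
    HasRainbowCopy G (SimpleGraph.pathGraph 6) c := by
  classical
  have aK : ∀ x y : Fin 4, x ≠ y → G.Adj (.inl x) (.inl y) :=
    fun x y h => hG (show (kg par).Adj (.inl x) (.inl y) from h)
  have aL : ∀ l, G.Adj (.inl (par l)) (.inr l) :=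
    fun l => hG (show (kg par).Adj (.inl (par l)) (.inr l) from rfl)
  have sw : ∀ a b, c s(a, b) = c s(b, a) := fun a b => by rw [Sym2.eq_swap]
  obtain ⟨u, hu⟩ : ∃ u, par l = u := ⟨_, rfl⟩
  have aLl := aL l
  rw [hu] at aLl
  obtain ⟨γ, hγ⟩ : ∃ γ, c s(.inr l, .inr y) = γ := ⟨_, rfl⟩
  obtain ⟨δ, hδ⟩ : ∃ δ, c s(.inr l, .inl u) = δ := ⟨_, rfl⟩
  have hγδ : γ ≠ δ := by
    rw [← hγ, ← hδ]; exact proper_ne hc hadj aLl.symm (by simp)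
  obtain ⟨v, w, hvu, hwu, hvw, c1, c2, c3⟩ : ∃ v w : Fin 4, v ≠ u ∧ w ≠ u ∧ v ≠ w ∧
      c s(.inl u, .inl v) ≠ γ ∧ c s(.inl w, .inl v) ≠ γ ∧ c s(.inl w, .inl v) ≠ δ := by
    by_cases hz : ∃ z, z ≠ u ∧ c s(.inl u, .inl z) = γ
    · obtain ⟨z, hzu, hz⟩ := hz
      obtain ⟨v, h1, h2, h3⟩ := six_core hG hc z u δ
      refine ⟨v, z, h2, hzu, h1, ?_, ?_, h3⟩
      · rw [← hz]
        exact proper_ne hc (aK _ _ h2.symm) (aK _ _ hzu.symm) (by simpa using h1)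
      · rw [← hz, sw (.inl u)]
        exact proper_ne hc (aK _ _ h1.symm) (aK _ _ hzu) (by simpa using h2)
    · push Not at hz
      obtain ⟨a, b, d, h1, h2, h3, h4, h5, h6⟩ : ∃ a b d : Fin 4, a ≠ u ∧ b ≠ u ∧ d ≠ u ∧
        a ≠ b ∧ a ≠ d ∧ b ≠ d := by clear * -; revert u; decide
      have e1 : c s(.inl a, .inl b) ≠ c s(.inl a, .inl d) :=
        proper_ne hc (aK _ _ h4) (aK _ _ h5) (by simpa using h6)
      have e2 : c s(.inl b, .inl a) ≠ c s(.inl b, .inl d) :=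
        proper_ne hc (aK _ _ h4.symm) (aK _ _ h6) (by simpa using h5)
      have e3 : c s(.inl d, .inl a) ≠ c s(.inl d, .inl b) :=
        proper_ne hc (aK _ _ h5.symm) (aK _ _ h6.symm) (by simpa using h4)
      rw [sw (.inl b) (.inl a)] at e2
      rw [sw (.inl d) (.inl a), sw (.inl d) (.inl b)] at e3
      by_contra hcon
      push Not at hcon
      have f1 := hcon b a h2 h1 h4.symm (hz b h2)
      have f2 := hcon d a h3 h1 h5.symm (hz d h3)
      have f3 := hcon d b h3 h2 h6.symm (hz d h3)
      generalize c s(.inl a, .inl b) = X at *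
      generalize c s(.inl a, .inl d) = Y at *
      generalize c s(.inl b, .inl d) = Z at *
      omega
  have nuy : (Sum.inl u : Fin 4 ⊕ Fin L) ≠ .inr y := by simp
  have r4 : RP G c [.inl v, .inl u, .inr l, .inr y] :=
    RP4 hc (aK _ _ hvu) aLl hadj (by simp) (by simp) (by simp) (by rw [hγ]; exact c1)
  have e1 : c s(.inl v, .inl w) ≠ c s(.inl v, .inl u) :=
    proper_ne hc (aK _ _ hvw) (aK _ _ hvu) (by simpa using hwu)
  have r5 : RP G c (.inl w :: [.inl v, .inl u, .inr l, .inr y]) := by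
    refine r4.cons (aK _ _ hvw.symm) (by simp [hvw.symm, hwu]) ?_
    simp only [ecols, List.mem_cons, List.not_mem_nil, or_false, not_or]
    refine ⟨by rw [sw]; exact e1, ?_, by rw [hγ]; exact c2⟩
    rw [sw (.inl u), hδ]; exact c3
  obtain ⟨ε, hε⟩ : ∃ ε, c s(.inl u, .inl v) = ε := ⟨_, rfl⟩
  have hεδ : ε ≠ δ := by
    rw [← hε, ← hδ, sw (.inr l)]; exact proper_ne hc (aK _ _ hvu.symm) aLl (by simp)
  have fin : ∀ x, par x = w → x ≠ y → c s(.inl w, .inr x) ∉ ({γ, δ, ε} : Finset ℕ) →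
      HasRainbowCopy G (SimpleGraph.pathGraph 6) c := by
    intro x hx hxy hxc
    have aLx := aL x
    rw [hx] at aLx
    simp only [Finset.mem_singleton, Finset.mem_insert, not_or] at hxc
    refine RP.hasCopy (l := .inr x :: .inl w :: [.inl v, .inl u, .inr l, .inr y]) ?_ rfl
    refine r5.cons aLx.symm ?_ ?_
    · have n1 : x ≠ l := by rintro rfl; exact hwu (hx.symm.trans hu)
      simp [n1, hxy]
    · rw [sw]
      simp only [ecols, List.mem_cons, List.not_mem_nil, or_false, not_or]
      refine ⟨proper_ne hc aLx (aK _ _ hvw.symm) (by simp), ?_, ?_, ?_⟩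
      · rw [sw (.inl v), hε]; exact hxc.2.2
      · rw [sw (.inl u), hδ]; exact hxc.2.1
      · rw [hγ]; exact hxc.1
  by_cases hyw : par y = w
  swap
  · obtain ⟨x, hx, -, hxc⟩ := six_pick hG hc hp w ∅ {γ, δ, ε} (by
      have := Finset.card_le_three (a := γ) (b := δ) (c := ε)
      rw [Finset.card_empty]; omega)
    exact fin x hx (by rintro rfl; exact hyw hx) hxc
  by_contra hno
  have hall : ∀ x, par x = w → x ≠ y → c s(.inl w, .inr x) = γ ∨ c s(.inl w, .inr x) = δ ∨
      c s(.inl w, .inr x) = ε := by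
    intro x hx hxy
    by_contra hcon
    exact hno (fin x hx hxy (by simpa using hcon))
  obtain ⟨m', hm', hm'y, hm'c⟩ := six_pick hG hc hp w {y} {γ, δ} (by
      have := Finset.card_le_two (a := γ) (b := δ)
      rw [Finset.card_singleton]; omega)
  obtain ⟨m2, hm2, hm2y, hm2c⟩ := six_pick hG hc hp w {y} {γ, ε} (by
      have := Finset.card_le_two (a := γ) (b := ε)
      rw [Finset.card_singleton]; omega)
  simp only [Finset.mem_singleton, Finset.mem_insert, not_or] at hm'y hm'c hm2y hm2c
  have k1 : c s(.inl w, .inr m') = ε := by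
    have := hall m' hm' hm'y; tauto
  have k2 : c s(.inl w, .inr m2) = δ := by
    have := hall m2 hm2 hm2y; tauto
  have aLy := aL y
  rw [hyw] at aLy
  have aLm' := aL m'
  rw [hm'] at aLm'
  have aLm2 := aL m2
  rw [hm2] at aLm2
  have g1 : c s(.inl w, .inr y) ≠ δ := by
    rw [← k2]; exact proper_ne hc aLy aLm2 (by simpa using Ne.symm hm2y)
  obtain ⟨x, hx, hxl, hxc⟩ := six_pick hG hc hp u {l} {γ, c s(.inl w, .inr y)} (by
      have := Finset.card_le_two (a := γ) (b := c s(.inl w, .inr y))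
      rw [Finset.card_singleton]; omega)
  simp only [Finset.mem_singleton, Finset.mem_insert, not_or] at hxl hxc
  have aLx := aL x
  rw [hx] at aLx
  have nyx : y ≠ x := by rintro rfl; exact hwu (hyw.symm.trans hx)
  have q4 : RP G c [.inr y, .inr l, .inl u, .inr x] :=
    RP4 hc hadj.symm aLl.symm aLx (by simp) (by simpa using nyx) (by simpa using Ne.symm hxl)
      (by rw [hγ]; exact Ne.symm hxc.1)
  have q5 : RP G c (.inl w :: [.inr y, .inr l, .inl u, .inr x]) := by
    refine q4.cons aLy (by simp [hwu]) ?_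
    simp only [ecols, List.mem_cons, List.not_mem_nil, or_false, not_or]
    refine ⟨?_, ?_, fun h => hxc.2 h.symm⟩
    · rw [sw (.inl w)]
      exact proper_ne hc aLy.symm hadj.symm (by simp)
    · rw [hδ]; exact g1
  refine hno (RP.hasCopy (l := .inr m' :: .inl w :: [.inr y, .inr l, .inl u, .inr x]) ?_ rfl)
  refine q5.cons aLm'.symm ?_ ?_
  · have n1 : m' ≠ l := by rintro rfl; exact hwu (hm'.symm.trans hu)
    have n2 : m' ≠ x := by rintro rfl; exact hwu (hm'.symm.trans hx)
    simp [n1, n2, hm'y]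
  · rw [sw]
    simp only [ecols, List.mem_cons, List.not_mem_nil, or_false, not_or]
    refine ⟨proper_ne hc aLm' aLy (by simpa using hm'y), ?_, ?_, ?_⟩
    · rw [sw (.inr y), hγ]; exact hm'c.1
    · rw [hδ]; exact hm'c.2
    · rw [k1, ← hε]
      exact proper_ne hc (aK _ _ hvu.symm) aLx (by simp)

end

theorem six_case (n : ℕ) (hn : 20 ≤ n) :
    ∃ G : SimpleGraph (Fin n),
      IsRainbowSat G (SimpleGraph.pathGraph 6) ∧ G.edgeSet.ncard = n + 2 := by
  classical
  obtain ⟨L, rfl⟩ : ∃ L, n = 4 + L := ⟨n - 4, by omega⟩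
  obtain ⟨p, hp⟩ := exists_fibres (L := L) (T := 4) (by norm_num) (fun _ => 4) (by
    simp only [Finset.sum_const, Finset.card_univ, Fintype.card_fin, smul_eq_mul]; omega)
  refine transfer (kg p) _ (by simp) ⟨kg_free p, ?_⟩ (by rw [kg_ncard]; omega)
  intro u v huv hn c hc
  have hadj : (kg p ⊔ SimpleGraph.fromEdgeSet {s(u, v)}).Adj u v := by
    right
    simp [huv]
  rcases u with (a | l) <;> rcases v with (b | y)
  · have hab : a ≠ b := fun h => huv (by rw [h])
    exact absurd (show (kg p).Adj (.inl a) (.inl b) from hab) hn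
  · exact six_leaf_core le_sup_left hc hp y a hn hadj.symm
  · exact six_leaf_core le_sup_left hc hp l b hn hadj
  · exact six_leaf_leaf le_sup_left hc hp l y (fun h => huv (by rw [h])) hadj

/-- For `k ≥ 6` and `n ≥ (k-1)·2^(k-4)` there is an `n`-vertex rainbow
`P_k`-saturated graph with exactly `n + (k-5)·2^(k-5)` edges; in particular the rainbow
saturation number of `P_k` is at most `n + (k-5)·2^(k-5)`. -/
theorem stmt_18 (k n : ℕ) (hk : 6 ≤ k) (hn : (k - 1) * 2 ^ (k - 4) ≤ n) :
    ∃ G : SimpleGraph (Fin n),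
      IsRainbowSat G (SimpleGraph.pathGraph k) ∧
      G.edgeSet.ncard = n + (k - 5) * 2 ^ (k - 5) := by
  rcases Nat.even_or_odd' k with ⟨t, rfl | rfl⟩
  · by_cases h3 : t = 3
    · subst h3
      exact six_case n (by simpa using hn)
    by_cases h4 : t = 4
    · subst h4
      exact eight_params (by simpa using hn)
    obtain ⟨r, rfl⟩ : ∃ r, t = r + 3 := ⟨t - 3, by omega⟩
    by_cases h5 : r = 2
    · subst h5
      exact even_three n (by simpa using hn)
    have a1 : 2 * (r + 3) - 1 = 2 * r + 5 := by omega
    have a2 : 2 * (r + 3) - 4 = 2 * r + 2 := by omega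
    have a3 : 2 * (r + 3) - 5 = 2 * r + 1 := by omega
    rw [a1, a2] at hn
    rw [a3]
    exact even_case r n (by omega) hn
  · obtain ⟨q, rfl⟩ : ∃ q, t = q + 3 := ⟨t - 3, by omega⟩
    have a1 : 2 * (q + 3) + 1 - 1 = 2 * q + 6 := by omega
    have a2 : 2 * (q + 3) + 1 - 4 = 2 * q + 3 := by omega
    have a3 : 2 * (q + 3) + 1 - 5 = 2 * q + 2 := by omega
    rw [a1, a2] at hn
    rw [a3]
    exact odd_case q n hn
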